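/- Let θ : ℝⁿ → [−∞,+∞] be symmetric and locally Lipschitz continuous relative to its domain, and let the spectral function g = θ∘λ be lower semicontinuous. Let (X,Y) ∈ gph ∂̂g with Y = U·Diag(y)·Uᵀ for some y ∈ ∂̂θ(λ(X)) and U ∈ Oⁿ(X), and assume θ is twice epi-differentiable at λ(X) for y. Let v = Qy for a block-diagonal permutation matrix Q (blocks indexed by α₁,…,α_r) chosen so that each block v_{α_m} has nonincreasing entries. Then for every H ∈ Sⁿ with d²g(X,Y)(H) < +∞, d²g(X,Y)(H) = d²θ(λ(X),v)(λ'(X;H)) + 2·∑_{m=1}^{r} ⟨Diag(y_{α_m}), U_{α_m}ᵀ·H·(μ_m·I − X)^†·H·U_{α_m}⟩. -/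

import Mathlib

open Filter Topology Matrix

noncomputable section

namespace SpecPaper

/-! ## Generic variational analysis definitions over a topological real vector space -/

variable {E : Type*}

section Generic

variable [AddCommGroup E] [Module ℝ E] [TopologicalSpace E]

/-- `f x` is finite (neither `+∞` nor `-∞`). -/
def IsFiniteAt (f : E → EReal) (x : E) : Prop :=
  f x ≠ ⊤ ∧ f x ≠ ⊥

/-- The norm induced by a given inner product. -/
noncomputable def nrm (ip : E → E → ℝ) (x : E) : ℝ :=
  Real.sqrt (ip x x)

/-- The subderivative `df(x)(w)`. -/
noncomputable def subderiv (f : E → EReal) (x w : E) : EReal :=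
  Filter.liminf (fun p : ℝ × E => (((p.1)⁻¹ : ℝ) : EReal) * (f (x + p.1 • p.2) - f x))
    ((nhdsWithin (0 : ℝ) (Set.Ioi 0)) ×ˢ nhds w)

/-- The second-order difference quotient `Δ²ₜ f(x,v)(w)`. -/
noncomputable def sdq2 (ip : E → E → ℝ) (f : E → EReal) (x v : E) (t : ℝ) (w : E) : EReal :=
  (((2 / t ^ 2) : ℝ) : EReal) * (f (x + t • w) - f x - ((t * ip v w : ℝ) : EReal))

/-- The second subderivative `d²f(x,v)(w)`. -/
noncomputable def subderiv2 (ip : E → E → ℝ) (f : E → EReal) (x v w : E) : EReal :=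
  Filter.liminf (fun p : ℝ × E => sdq2 ip f x v p.1 p.2)
    ((nhdsWithin (0 : ℝ) (Set.Ioi 0)) ×ˢ nhds w)

/-- Twice epi-differentiability of `f` at `x` for `v`. -/
def TwiceEpiDiff (ip : E → E → ℝ) (f : E → EReal) (x v : E) : Prop :=
  IsFiniteAt f x ∧
    ∀ t : ℕ → ℝ, (∀ k, 0 < t k) → Tendsto t atTop (nhds 0) →
      ∀ w : E, ∃ ws : ℕ → E, Tendsto ws atTop (nhds w) ∧
        Tendsto (fun k => sdq2 ip f x v (t k) (ws k)) atTop (nhds (subderiv2 ip f x v w))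

/-- `v` is a regular subgradient of `f` at `x`. -/
def RegSubgrad (ip : E → E → ℝ) (f : E → EReal) (x v : E) : Prop :=
  IsFiniteAt f x ∧
    (0 : EReal) ≤ Filter.liminf
      (fun y : E =>
        (((nrm ip (y - x))⁻¹ : ℝ) : EReal) * (f y - f x - ((ip v (y - x) : ℝ) : EReal)))
      (nhdsWithin x {x}ᶜ)

/-- `v` is a (limiting) subgradient of `f` at `x`. -/
def LimSubgrad (ip : E → E → ℝ) (f : E → EReal) (x v : E) : Prop :=
  ∃ xs vs : ℕ → E, (∀ k, RegSubgrad ip f (xs k) (vs k)) ∧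
    Tendsto xs atTop (nhds x) ∧ Tendsto vs atTop (nhds v) ∧
    Tendsto (fun k => f (xs k)) atTop (nhds (f x))

/-- The tangent cone to `C` at `x`. -/
def tangentCone (C : Set E) (x : E) : Set E :=
  {w | ∃ (t : ℕ → ℝ) (ws : ℕ → E), (∀ k, 0 < t k) ∧ Tendsto t atTop (nhds 0) ∧
    Tendsto ws atTop (nhds w) ∧ ∀ k, x + t k • ws k ∈ C}

/-- The regular normal cone to `C` at `x`. -/
def regNormalCone (ip : E → E → ℝ) (C : Set E) (x : E) : Set E :=
  {v | ∀ w ∈ tangentCone C x, ip v w ≤ 0}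

/-- The limiting normal cone to `C` at `x`. -/
def limNormalCone (ip : E → E → ℝ) (C : Set E) (x : E) : Set E :=
  {v | ∃ xs vs : ℕ → E, (∀ k, xs k ∈ C) ∧ (∀ k, vs k ∈ regNormalCone ip C (xs k)) ∧
    Tendsto xs atTop (nhds x) ∧ Tendsto vs atTop (nhds v)}

/-- The critical cone `C_f(x,v)`. -/
def criticalCone (ip : E → E → ℝ) (f : E → EReal) (x v : E) : Set E :=
  {w | subderiv f x w = ((ip v w : ℝ) : EReal)}

/-- `f` is locally Lipschitz continuous at `x` relative to its domain. -/
def LocLipAtRelDom (ip : E → E → ℝ) (f : E → EReal) (x : E) : Prop :=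
  IsFiniteAt f x ∧
    ∃ V ∈ nhds x, ∃ ℓ : ℝ, 0 ≤ ℓ ∧
      ∀ a ∈ V, ∀ b ∈ V, f a ≠ ⊤ → f b ≠ ⊤ →
        f a ≠ ⊥ ∧ f b ≠ ⊥ ∧ |(f a).toReal - (f b).toReal| ≤ ℓ * nrm ip (a - b)

/-- `f` is locally Lipschitz continuous relative to its domain. -/
def LocLipRelDom (ip : E → E → ℝ) (f : E → EReal) : Prop :=
  ∀ x : E, f x ≠ ⊤ → LocLipAtRelDom ip f x

/-- `v` is a proximal subgradient of `f` at `x`. -/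
def ProxSubgrad (ip : E → E → ℝ) (f : E → EReal) (x v : E) : Prop :=
  IsFiniteAt f x ∧
    ∃ r > (0 : ℝ), ∃ ε > (0 : ℝ), ∀ x' : E, nrm ip (x' - x) ≤ ε →
      f x + ((ip v (x' - x) - r / 2 * ip (x' - x) (x' - x) : ℝ) : EReal) ≤ f x'

/-- `f` is prox-regular at `x` for `v`. -/
def ProxRegularAtFor (ip : E → E → ℝ) (f : E → EReal) (x v : E) : Prop :=
  IsFiniteAt f x ∧
    (∃ δ > (0 : ℝ), LowerSemicontinuousOn f {x' | nrm ip (x' - x) < δ}) ∧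
    ∃ ε > (0 : ℝ), ∃ r : ℝ, 0 ≤ r ∧
      ∀ x₁ v₁ : E, LimSubgrad ip f x₁ v₁ → nrm ip (x₁ - x) < ε → nrm ip (v₁ - v) < ε →
        f x₁ < f x + (ε : EReal) →
        ∀ x' : E, nrm ip (x' - x) < ε →
          f x₁ + ((ip v₁ (x' - x₁) - r / 2 * ip (x' - x₁) (x' - x₁) : ℝ) : EReal) ≤ f x'

/-- `f` is prox-regular at `x` (for every subgradient). -/
def ProxRegularAt (ip : E → E → ℝ) (f : E → EReal) (x : E) : Prop :=
  ∀ v : E, LimSubgrad ip f x v → ProxRegularAtFor ip f x v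

/-- `f` is subdifferentially continuous at `x`. -/
def SubdiffContAt (ip : E → E → ℝ) (f : E → EReal) (x : E) : Prop :=
  ∀ v : E, LimSubgrad ip f x v →
    ∀ xs vs : ℕ → E, (∀ k, LimSubgrad ip f (xs k) (vs k)) →
      Tendsto xs atTop (nhds x) → Tendsto vs atTop (nhds v) →
      Tendsto (fun k => f (xs k)) atTop (nhds (f x))

/-- `f` is prox-bounded. -/
def ProxBounded (ip : E → E → ℝ) (f : E → EReal) : Prop :=
  ∃ α c : ℝ, ∀ x : E, (c : EReal) ≤ f x + ((α * ip x x : ℝ) : EReal)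

/-- The proximal mapping (as a set of minimizers). -/
def proxSet (ip : E → E → ℝ) (f : E → EReal) (γ : ℝ) (x : E) : Set E :=
  {w | ∀ w' : E,
    f w + ((1 / (2 * γ) * ip (w - x) (w - x) : ℝ) : EReal) ≤
      f w' + ((1 / (2 * γ) * ip (w' - x) (w' - x) : ℝ) : EReal)}

/-- The proximal map of `f` with parameter `γ` is single-valued around `z` and the resulting
map is directionally differentiable at `z`. -/
def ProxSingleDirDiff (ip : E → E → ℝ) (f : E → EReal) (γ : ℝ) (z : E) : Prop :=
  ∃ V ∈ nhds z, ∃ P : E → E, (∀ u ∈ V, proxSet ip f γ u = {P u}) ∧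
    ∀ h : E, ∃ L : E,
      Tendsto (fun t : ℝ => t⁻¹ • (P (z + t • h) - P z)) (nhdsWithin 0 (Set.Ioi 0)) (nhds L)

/-- The parabolic difference quotient. -/
noncomputable def parabQuot (f : E → EReal) (x w : E) (t : ℝ) (z : E) : EReal :=
  (((2 / t ^ 2) : ℝ) : EReal) *
    (f (x + t • w + (t ^ 2 / 2) • z) - f x - ((t * (subderiv f x w).toReal : ℝ) : EReal))

/-- The parabolic subderivative `d²f(x)(w | z)`. -/
noncomputable def parabSubderiv (f : E → EReal) (x w z : E) : EReal :=
  Filter.liminf (fun p : ℝ × E => parabQuot f x w p.1 p.2)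
    ((nhdsWithin (0 : ℝ) (Set.Ioi 0)) ×ˢ nhds z)

/-- `f` is parabolically epi-differentiable at `x` for `w`. -/
def ParabEpiDiff (f : E → EReal) (x w : E) : Prop :=
  (∃ z : E, parabSubderiv f x w z < ⊤) ∧
    ∀ t : ℕ → ℝ, (∀ k, 0 < t k) → Tendsto t atTop (nhds 0) →
      ∀ z : E, ∃ zs : ℕ → E, Tendsto zs atTop (nhds z) ∧
        Tendsto (fun k => parabQuot f x w (t k) (zs k)) atTop (nhds (parabSubderiv f x w z))

/-- `φ` is a generalized quadratic form: its domain is a linear subspace and on the domain it is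
given by a symmetric linear operator. -/
def IsGQF (ip : E → E → ℝ) (φ : E → EReal) : Prop :=
  (φ 0 ≠ ⊤) ∧
  (∀ x y : E, φ x ≠ ⊤ → φ y ≠ ⊤ → φ (x + y) ≠ ⊤) ∧
  (∀ (c : ℝ) (x : E), φ x ≠ ⊤ → φ (c • x) ≠ ⊤) ∧
  ∃ L : E → E,
    (∀ x y : E, φ x ≠ ⊤ → φ y ≠ ⊤ → L (x + y) = L x + L y) ∧
    (∀ (c : ℝ) (x : E), φ x ≠ ⊤ → L (c • x) = c • L x) ∧
    (∀ x y : E, φ x ≠ ⊤ → φ y ≠ ⊤ → ip (L x) y = ip x (L y)) ∧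
    (∀ x : E, φ x ≠ ⊤ → φ x = ((ip (L x) x : ℝ) : EReal))

/-- `f` is generalized twice differentiable at `x` for `v`. -/
def GenTwiceDiff (ip : E → E → ℝ) (f : E → EReal) (x v : E) : Prop :=
  TwiceEpiDiff ip f x v ∧ IsGQF ip (subderiv2 ip f x v)

/-- Proto-differentiability of a set-valued map `F` at `x` for `y ∈ F x`. -/
def ProtoDiff (F : E → Set E) (x y : E) : Prop :=
  ∀ w η : E, (w, η) ∈ tangentCone {p : E × E | p.2 ∈ F p.1} (x, y) →
    ∀ t : ℕ → ℝ, (∀ k, 0 < t k) → Tendsto t atTop (nhds 0) →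
      ∃ ws ηs : ℕ → E, Tendsto ws atTop (nhds w) ∧ Tendsto ηs atTop (nhds η) ∧
        ∀ k, y + t k • ηs k ∈ F (x + t k • ws k)

/-- Relative interior of a set (interior relative to its affine hull). -/
def relInterior (C : Set E) : Set E :=
  {y | y ∈ C ∧ ∃ V ∈ nhds y, ∀ z ∈ V, z ∈ affineSpan ℝ C → z ∈ C}

/-- A polyhedral set: the intersection of finitely many closed half-spaces. -/
def IsPolyhedral (ip : E → E → ℝ) (C : Set E) : Prop :=
  ∃ (k : ℕ) (a : Fin k → E) (b : Fin k → ℝ), C = {x | ∀ j : Fin k, ip (a j) x ≤ b j}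

/-- The subdifferential of a convex function. -/
def convexSubdiff (ip : E → E → ℝ) (f : E → EReal) (x : E) : Set E :=
  {v | ∀ z : E, f x + ((ip v (z - x) : ℝ) : EReal) ≤ f z}

/-- The natural inner product on `E × ℝ`. -/
def ipProd (ip : E → E → ℝ) : E × ℝ → E × ℝ → ℝ :=
  fun p q => ip p.1 q.1 + p.2 * q.2

/-- The epigraph of `f`. -/
def epiSet (f : E → EReal) : Set (E × ℝ) :=
  {p | f p.1 ≤ (p.2 : EReal)}

/-- `f` is subdifferentially regular at `x`. -/
def SubdiffRegularAt (ip : E → E → ℝ) (f : E → EReal) (x : E) : Prop :=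
  IsFiniteAt f x ∧
    regNormalCone (ipProd ip) (epiSet f) (x, (f x).toReal) =
      limNormalCone (ipProd ip) (epiSet f) (x, (f x).toReal)

/-! Real-valued versions: semidifferentiability, gradients. -/

/-- `f` is semidifferentiable at `x`. -/
def SemiDiffAt (f : E → ℝ) (x : E) : Prop :=
  ∀ w : E, ∃ d : ℝ,
    Tendsto (fun p : ℝ × E => (p.1)⁻¹ * (f (x + p.1 • p.2) - f x))
      ((nhdsWithin (0 : ℝ) (Set.Ioi 0)) ×ˢ nhds w) (nhds d)

/-- The (real value of the) subderivative of a real-valued function. -/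
noncomputable def dReal (f : E → ℝ) (x w : E) : ℝ :=
  (subderiv (fun y => ((f y : ℝ) : EReal)) x w).toReal

/-- The second-order difference quotient built from the subderivative. -/
noncomputable def sdq2R (f : E → ℝ) (x : E) (t : ℝ) (w : E) : ℝ :=
  (2 / t ^ 2) * (f (x + t • w) - f x - t * dReal f x w)

/-- `f` is twice semidifferentiable at `x`. -/
def TwiceSemiDiffAt (f : E → ℝ) (x : E) : Prop :=
  SemiDiffAt f x ∧
    ∀ w : E, ∃ d : ℝ,
      Tendsto (fun p : ℝ × E => sdq2R f x p.1 p.2)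
        ((nhdsWithin (0 : ℝ) (Set.Ioi 0)) ×ˢ nhds w) (nhds d)

/-- The second semiderivative `d²f(x)(w)` (the liminf; it is the full limit whenever `f` is
twice semidifferentiable at `x`). -/
noncomputable def secondSemiDeriv (f : E → ℝ) (x w : E) : EReal :=
  Filter.liminf (fun p : ℝ × E => ((sdq2R f x p.1 p.2 : ℝ) : EReal))
    ((nhdsWithin (0 : ℝ) (Set.Ioi 0)) ×ˢ nhds w)

/-- `f` is (Fréchet) differentiable at `x` with gradient `g` (w.r.t. inner product `ip`). -/
def HasGradAt (ip : E → E → ℝ) (f : E → ℝ) (x g : E) : Prop :=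
  Tendsto (fun y : E => (nrm ip (y - x))⁻¹ * (f y - f x - ip g (y - x)))
    (nhdsWithin x {x}ᶜ) (nhds 0)

/-- `f` is locally Lipschitz continuous around `x`. -/
def LocLipAt (ip : E → E → ℝ) (f : E → ℝ) (x : E) : Prop :=
  ∃ V ∈ nhds x, ∃ ℓ : ℝ, 0 ≤ ℓ ∧ ∀ a ∈ V, ∀ b ∈ V, |f a - f b| ≤ ℓ * nrm ip (a - b)

/-- `f` is twice differentiable at `x` with gradient map `G` near `x` and second derivative
(the derivative of `G` at `x`) given by the linear map `Dxx`. -/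
def HasSecondDerivAt (ip : E → E → ℝ) (f : E → EReal) (x : E) (G : E → E) (Dxx : E → E) :
    Prop :=
  ∃ V ∈ nhds x, ∃ fr : E → ℝ,
    (∀ z ∈ V, f z = ((fr z : ℝ) : EReal)) ∧
    (∀ z ∈ V, HasGradAt ip fr z (G z)) ∧
    IsLinearMap ℝ Dxx ∧
    Tendsto (fun z : E => (nrm ip (z - x))⁻¹ • (G z - G x - Dxx (z - x)))
      (nhdsWithin x {x}ᶜ) (nhds 0)

/-- `f` is twice differentiable at `x`. -/
def TwiceDiffAt (ip : E → E → ℝ) (f : E → EReal) (x : E) : Prop :=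
  ∃ G Dxx : E → E, HasSecondDerivAt ip f x G Dxx

end Generic

/-! ## Eigenvalues and spectral machinery -/

open scoped Classical in
/-- The eigenvalues of a real symmetric matrix, arranged in nonincreasing order
(junk value `0` if the matrix is not symmetric). -/
noncomputable def eigval {n : ℕ} (X : Matrix (Fin n) (Fin n) ℝ) : Fin n → ℝ :=
  if h : X.IsHermitian then
    fun i => h.eigenvalues (Tuple.sort (fun j => -h.eigenvalues j) i)
  else 0

/-- `Oⁿ(X)`: orthogonal matrices realizing the ordered spectral decomposition of `X`. -/
def eigOrth {n : ℕ} (X : Matrix (Fin n) (Fin n) ℝ) : Set (Matrix (Fin n) (Fin n) ℝ) :=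
  {U | U * Uᵀ = 1 ∧ X = U * Matrix.diagonal (eigval X) * Uᵀ}

open scoped Classical in
/-- The block `α_m` of indices `j` whose eigenvalue `λ_j(X)` equals `λ_i(X)`. -/
noncomputable def blockSet {n : ℕ} (X : Matrix (Fin n) (Fin n) ℝ) (i : Fin n) :
    Finset (Fin n) :=
  Finset.univ.filter fun j => eigval X j = eigval X i

lemma mem_blockSet_self {n : ℕ} (X : Matrix (Fin n) (Fin n) ℝ) (i : Fin n) :
    i ∈ blockSet X i := by
  simp [blockSet]

/-- The increasing enumeration of the block of `i`. -/
noncomputable def blockEmb {n : ℕ} (X : Matrix (Fin n) (Fin n) ℝ) (i : Fin n) :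
    Fin (blockSet X i).card → Fin n :=
  fun a => ((blockSet X i).orderIsoOfFin rfl a : Fin n)

/-- The position of `i` inside its own block. -/
noncomputable def blockIdx {n : ℕ} (X : Matrix (Fin n) (Fin n) ℝ) (i : Fin n) :
    Fin (blockSet X i).card :=
  ((blockSet X i).orderIsoOfFin rfl).symm ⟨i, mem_blockSet_self X i⟩

/-- The principal submatrix of `M` corresponding to the block of `i` (for `X`). -/
noncomputable def blockMat {n : ℕ} (X M : Matrix (Fin n) (Fin n) ℝ) (i : Fin n) :
    Matrix (Fin (blockSet X i).card) (Fin (blockSet X i).card) ℝ :=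
  Matrix.of fun a b => M (blockEmb X i a) (blockEmb X i b)

/-- The directional derivative `λ'(X;H)` of the ordered eigenvalue map, computed through
`U ∈ Oⁿ(X)`: blockwise ordered eigenvalues of `U_{α_m}ᵀ H U_{α_m}`. -/
noncomputable def lambdaDir {n : ℕ} (X U H : Matrix (Fin n) (Fin n) ℝ) : Fin n → ℝ :=
  fun i => eigval (blockMat X (Uᵀ * H * U) i) (blockIdx X i)

open scoped Classical in
/-- The Moore–Penrose pseudoinverse of a square real matrix, characterized by the four
Penrose equations. -/
noncomputable def pinv {n : ℕ} (A : Matrix (Fin n) (Fin n) ℝ) :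
    Matrix (Fin n) (Fin n) ℝ :=
  if h : ∃ B : Matrix (Fin n) (Fin n) ℝ,
      A * B * A = A ∧ B * A * B = B ∧ (A * B)ᵀ = A * B ∧ (B * A)ᵀ = B * A
  then h.choose else 0

/-- The curvature term `2 ∑ₘ ⟨Diag(y)_{αₘαₘ}, U_{αₘ}ᵀ H (μₘ I - X)† H U_{αₘ}⟩`, written as a
single sum over all indices. -/
noncomputable def curvTerm {n : ℕ} (X U H : Matrix (Fin n) (Fin n) ℝ) (y : Fin n → ℝ) : ℝ :=
  2 * ∑ i : Fin n, y i *
    (Uᵀ * (H * pinv (eigval X i • (1 : Matrix (Fin n) (Fin n) ℝ) - X) * H) * U) i i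

/-- Two symmetric matrices admit a simultaneous ordered spectral decomposition. -/
def simOrdSpec {k : ℕ} (A B : Matrix (Fin k) (Fin k) ℝ) : Prop :=
  ∃ P : Matrix (Fin k) (Fin k) ℝ, P * Pᵀ = 1 ∧
    A = P * Matrix.diagonal (eigval A) * Pᵀ ∧
    B = P * Matrix.diagonal (eigval B) * Pᵀ

/-- The subspace of symmetric `n × n` real matrices. -/
def symSubmodule (n : ℕ) : Submodule ℝ (Matrix (Fin n) (Fin n) ℝ) where
  carrier := {A | A.IsSymm}
  add_mem' := by
    intro a b ha hb
    simp only [Set.mem_setOf_eq, Matrix.IsSymm] at *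
    rw [Matrix.transpose_add, ha, hb]
  zero_mem' := by
    simp only [Set.mem_setOf_eq, Matrix.IsSymm, Matrix.transpose_zero]
  smul_mem' := by
    intro c a ha
    simp only [Set.mem_setOf_eq, Matrix.IsSymm] at *
    rw [Matrix.transpose_smul, ha]

/-- The space `Sⁿ` of symmetric `n × n` real matrices. -/
abbrev Sym (n : ℕ) : Type := ↥(symSubmodule n)

/-- The trace inner product `⟨A, B⟩ = tr(AB)` on `Sⁿ`. -/
noncomputable def ipM {n : ℕ} (A B : Sym n) : ℝ :=
  ((A : Matrix (Fin n) (Fin n) ℝ) * (B : Matrix (Fin n) (Fin n) ℝ)).trace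

/-- The Euclidean inner product on `ℝⁿ`. -/
def ipV {n : ℕ} (v w : Fin n → ℝ) : ℝ :=
  ∑ i, v i * w i

/-- The spectral function `g = θ ∘ λ` on `Sⁿ`. -/
noncomputable def specFn {n : ℕ} (θ : (Fin n → ℝ) → EReal) : Sym n → EReal :=
  fun A => θ (eigval (A : Matrix (Fin n) (Fin n) ℝ))

/-- A function on `ℝⁿ` is symmetric (permutation invariant). -/
def SymmetricFn {n : ℕ} {α : Type*} (θ : (Fin n → ℝ) → α) : Prop :=
  ∀ (x : Fin n → ℝ) (σ : Equiv.Perm (Fin n)), θ (fun i => x (σ i)) = θ x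

/-- The diagonal matrix `Diag(w)` as an element of `Sⁿ`. -/
noncomputable def diagSym {n : ℕ} (w : Fin n → ℝ) : Sym n :=
  ⟨Matrix.diagonal w, Matrix.isSymm_diagonal w⟩

/-- The `i`-th order statistic: `orderStat x i` is the `i`-th largest entry of `x`. -/
noncomputable def orderStat {n : ℕ} (x : Fin n → ℝ) : Fin n → ℝ :=
  fun i => x (Tuple.sort (fun j => -x j) i)

/-!
The second-order quotient of `g = θ ∘ λ` at `X` for `Y` in the direction `H` exceeds that of `θ` at
`λ(X)` for `v` in the direction `w = (λ(X + tH) - λ(X)) / t` by the real number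
`(2 / t) (⟨v, w⟩ - ⟨Y, H⟩)`, so the point is to identify the limit of this number.

For the lower bound, choose `c` so large that `d = v + c λ(X)` is nonincreasing. Fan's inequality
bounds `⟨d, λ(X + tH)⟩` from below by `⟨W Diag(d) Wᵀ, X + tH⟩` for every orthogonal `W`; expand this
to second order along a path `W = U (1 + t M(t))`, where `M(0)` is the antisymmetric matrix with
entries `(UᵀHU)ᵢⱼ / (λⱼ - λᵢ)` across distinct eigenvalues. The contribution of `c λ(X)` is known
exactly because `‖λ(X + tH)‖ = ‖X + tH‖`, and what remains is the curvature term.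

For the upper bound, finiteness of `d²g(X, Y)(H)` forces `⟨v, λ'(X; H)⟩ = ⟨Y, H⟩`. By the equality
case of Fan's inequality, the diagonal blocks of `UᵀHU` are diagonalized by a block diagonal
orthogonal matrix `P` commuting with `Diag(v)`. For a recovery sequence `w` of `θ` at `λ'(X; H)`,
the matrices `V Diag(λ(X) + t w) Vᵀ` with `V = U (1 + t M(t)) P` then leave `X` in directions that
tend to `H`, and the number above tends to the same curvature term.
-/

/-! ### Orthogonal conjugation -/

section Conjugation

variable {ι α : Type*} [Fintype ι] [CommRing α]

theorem trace_conj_mul (Q A Z : Matrix ι ι α) :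
    (Q * A * Qᵀ * Z).trace = (A * (Qᵀ * Z * Q)).trace := by
  rw [Matrix.mul_assoc, Matrix.mul_assoc, trace_mul_comm Q]
  simp only [Matrix.mul_assoc]

variable [DecidableEq ι]

theorem conj_diagonal_apply (Q : Matrix ι ι α) (d : ι → α) (i j : ι) :
    (Q * diagonal d * Qᵀ) i j = ∑ k, Q i k * d k * Q j k := by
  rw [mul_apply]
  exact Finset.sum_congr rfl fun k _ => by rw [mul_diagonal, transpose_apply]

theorem isSymm_conj_diagonal (Q : Matrix ι ι α) (d : ι → α) : (Q * diagonal d * Qᵀ).IsSymm := by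
  simp [IsSymm, transpose_mul, Matrix.mul_assoc]

theorem submatrix_conj_diagonal (Q : Matrix ι ι α) (d : ι → α) (τ : Equiv.Perm ι) :
    Q.submatrix id τ * diagonal (d ∘ τ) * (Q.submatrix id τ)ᵀ = Q * diagonal d * Qᵀ := by
  ext i j
  simp only [conj_diagonal_apply]
  exact Equiv.sum_comp τ fun k => Q i k * d k * Q j k

theorem submatrix_mul_transpose_eq_one {Q : Matrix ι ι α} (hQ : Q * Qᵀ = 1)
    (τ : Equiv.Perm ι) : Q.submatrix id τ * (Q.submatrix id τ)ᵀ = 1 := by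
  rw [transpose_submatrix, submatrix_mul_equiv, hQ, submatrix_id_id]

theorem mul_mul_transpose_eq_one {Q R : Matrix ι ι α} (hQ : Q * Qᵀ = 1) (hR : R * Rᵀ = 1) :
    Q * R * (Q * R)ᵀ = 1 := by
  rw [transpose_mul, Matrix.mul_assoc, ← Matrix.mul_assoc R, hR, Matrix.one_mul, hQ]

theorem conj_mul_conj {Q : Matrix ι ι α} (hQ : Q * Qᵀ = 1) (A B : Matrix ι ι α) :
    Q * A * Qᵀ * (Q * B * Qᵀ) = Q * (A * B) * Qᵀ := by
  calc Q * A * Qᵀ * (Q * B * Qᵀ) = Q * A * (Qᵀ * Q) * B * Qᵀ := by simp only [Matrix.mul_assoc]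
    _ = Q * (A * B) * Qᵀ := by
      rw [mul_eq_one_comm.mp hQ, Matrix.mul_one, Matrix.mul_assoc Q A B]

theorem trace_conj_diagonal_mul_conj_diagonal (Q R : Matrix ι ι α) (a b : ι → α) :
    (Q * diagonal a * Qᵀ * (R * diagonal b * Rᵀ)).trace
      = ∑ i, ∑ j, a i * (Qᵀ * R) i j ^ 2 * b j := by
  have hconj : Qᵀ * (R * diagonal b * Rᵀ) * Q = Qᵀ * R * diagonal b * (Qᵀ * R)ᵀ := by
    simp only [transpose_mul, transpose_transpose, Matrix.mul_assoc]
  rw [trace_conj_mul, hconj, trace]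
  refine Finset.sum_congr rfl fun i _ => ?_
  rw [diag_apply, diagonal_mul, conj_diagonal_apply, Finset.mul_sum]
  exact Finset.sum_congr rfl fun j _ => by ring

theorem trace_conj_diagonal_mul_self {Q : Matrix ι ι α} (hQ : Q * Qᵀ = 1) (a b : ι → α) :
    (Q * diagonal a * Qᵀ * (Q * diagonal b * Qᵀ)).trace = a ⬝ᵥ b := by
  rw [trace_conj_diagonal_mul_conj_diagonal, mul_eq_one_comm.mp hQ]
  simp [one_apply, dotProduct]

end Conjugation

section RealMatrices

variable {ι : Type*} [Fintype ι]

theorem isCompact_setOf_mul_transpose_eq_one [DecidableEq ι] :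
    IsCompact {Q : Matrix ι ι ℝ | Q * Qᵀ = 1} := by
  have hcompact : IsCompact {Q : Matrix ι ι ℝ | ∀ i j, Q i j ∈ Metric.closedBall 0 1} :=
    isCompact_pi_infinite fun _ => isCompact_pi_infinite fun _ => isCompact_closedBall 0 1
  refine hcompact.of_isClosed_subset (isClosed_eq (by fun_prop) continuous_const)
    fun Q hQ i j => mem_closedBall_zero_iff.mpr (entry_norm_bound_of_unitary ?_ i j)
  exact mem_unitaryGroup_iff.mpr ((congrArg _ (conjTranspose_eq_transpose_of_trivial Q)).trans hQ)

theorem eq_of_dotProduct_self_add_le {a b : ι → ℝ}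
    (h : a ⬝ᵥ a + b ⬝ᵥ b ≤ 2 * (a ⬝ᵥ b)) : a = b := by
  refine sub_eq_zero.mp (dotProduct_self_eq_zero.mp (le_antisymm ?_ ?_))
  · simp only [sub_dotProduct, dotProduct_sub, dotProduct_comm b a]
    linarith
  · exact Finset.sum_nonneg fun i _ => mul_self_nonneg _

theorem eq_of_trace_mul_self_add_le {A B : Matrix ι ι ℝ} (hA : A.IsSymm) (hB : B.IsSymm)
    (h : (A * A).trace + (B * B).trace ≤ 2 * (A * B).trace) : A = B := by
  have htrace : ((A - B) * (A - B)ᴴ).trace ≤ 0 := by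
    simp only [conjTranspose_eq_transpose_of_trivial, transpose_sub, hA.eq, hB.eq, Matrix.sub_mul,
      Matrix.mul_sub, trace_sub, trace_mul_comm B A]
    linarith
  exact sub_eq_zero.mp (trace_mul_conjTranspose_self_eq_zero_iff.mp
    (htrace.antisymm (posSemidef_self_mul_conjTranspose _).trace_nonneg))

end RealMatrices

/-! ### Ordered eigenvalues and Fan's inequality -/

section Fan

variable {ι : Type*} [Fintype ι] [DecidableEq ι] {S Q R : Matrix ι ι ℝ} {a b : ι → ℝ}

theorem sq_mem_doublyStochastic (hS : S * Sᵀ = 1) :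
    (of fun i j => S i j ^ 2) ∈ doublyStochastic ℝ ι := by
  refine mem_doublyStochastic_iff_sum.mpr ⟨fun i j => sq_nonneg _, fun i => ?_, fun j => ?_⟩
  · simpa [mul_apply, sq] using congrFun₂ hS i i
  · have hS' : Sᵀ * S = 1 := mul_eq_one_comm.mp hS
    simpa [mul_apply, sq] using congrFun₂ hS' j j

-- Birkhoff: a doubly stochastic matrix is a convex combination of permutations, and each
-- permutation is handled by the rearrangement inequality.
theorem dotProduct_mulVec_le_of_mem_doublyStochastic {M : Matrix ι ι ℝ}
    (hM : M ∈ doublyStochastic ℝ ι) (hab : Monovary a b) : a ⬝ᵥ M *ᵥ b ≤ a ⬝ᵥ b := by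
  obtain ⟨w, hw_nonneg, hw_sum, rfl⟩ := exists_eq_sum_perm_of_mem_doublyStochastic hM
  calc a ⬝ᵥ (∑ τ, w τ • τ.permMatrix ℝ) *ᵥ b = ∑ τ, w τ * ∑ i, a i * b (τ i) := by
        simp_rw [sum_mulVec, dotProduct_sum, smul_mulVec, permMatrix_mulVec, dotProduct_smul]
        rfl
    _ ≤ ∑ τ, w τ * (a ⬝ᵥ b) := Finset.sum_le_sum fun τ _ =>
        mul_le_mul_of_nonneg_left hab.sum_mul_comp_perm_le_sum_mul (hw_nonneg τ)
    _ = a ⬝ᵥ b := by rw [← Finset.sum_mul, hw_sum, one_mul]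

theorem trace_conj_diagonal_mul_le (hQ : Q * Qᵀ = 1) (hR : R * Rᵀ = 1) (hab : Monovary a b) :
    (Q * diagonal a * Qᵀ * (R * diagonal b * Rᵀ)).trace ≤ a ⬝ᵥ b := by
  have hQR : Qᵀ * R * (Qᵀ * R)ᵀ = 1 :=
    mul_mul_transpose_eq_one (by rw [transpose_transpose, mul_eq_one_comm, hQ]) hR
  refine le_of_eq_of_le ?_
    (dotProduct_mulVec_le_of_mem_doublyStochastic (sq_mem_doublyStochastic hQR) hab)
  rw [trace_conj_diagonal_mul_conj_diagonal]
  simp only [dotProduct, mulVec, of_apply, Finset.mul_sum, mul_assoc]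

theorem eq_of_conj_diagonal_eq (hQ : Q * Qᵀ = 1) (hR : R * Rᵀ = 1) (hab : Monovary a b)
    (h : Q * diagonal a * Qᵀ = R * diagonal b * Rᵀ) : a = b := by
  have hle := trace_conj_diagonal_mul_le hQ hR hab
  have haa := trace_conj_diagonal_mul_self hQ a a
  have hbb := trace_conj_diagonal_mul_self hR b b
  rw [h] at hle haa
  exact eq_of_dotProduct_self_add_le (by linarith)

end Fan

section Eigval

variable {n : ℕ} {A B P Q : Matrix (Fin n) (Fin n) ℝ} {d : Fin n → ℝ}

theorem eigval_antitone (A : Matrix (Fin n) (Fin n) ℝ) : Antitone (eigval A) := by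
  unfold eigval
  split_ifs with hA
  · exact fun i j hij => neg_le_neg_iff.mp (Tuple.monotone_sort (fun k => -hA.eigenvalues k) hij)
  · exact antitone_const

theorem exists_mem_eigOrth (hA : A.IsSymm) : ∃ Q, Q ∈ eigOrth A := by
  have hA' : A.IsHermitian := (conjTranspose_eq_transpose_of_trivial A).trans hA
  set W : Matrix (Fin n) (Fin n) ℝ := hA'.eigenvectorUnitary.val
  have hstar : star W = Wᵀ := conjTranspose_eq_transpose_of_trivial W
  have hWW : W * Wᵀ = 1 := hstar ▸ Unitary.mul_star_self_of_mem hA'.eigenvectorUnitary.2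
  have hspec : A = W * diagonal hA'.eigenvalues * Wᵀ := hstar ▸ hA'.spectral_theorem
  set τ := Tuple.sort fun j => -hA'.eigenvalues j
  have hτ : eigval A = hA'.eigenvalues ∘ τ := dif_pos hA'
  exact ⟨W.submatrix id τ, submatrix_mul_transpose_eq_one hWW τ, by
    rw [hτ, submatrix_conj_diagonal, ← hspec]⟩

theorem eigval_conj_diagonal (hQ : Q * Qᵀ = 1) (hd : Antitone d) :
    eigval (Q * diagonal d * Qᵀ) = d := by
  obtain ⟨R, hR, hspec⟩ := exists_mem_eigOrth (isSymm_conj_diagonal Q d)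
  exact (eq_of_conj_diagonal_eq hQ hR (hd.monovary (eigval_antitone _)) hspec).symm

theorem exists_eigval_conj_diagonal_eq_comp (hQ : Q * Qᵀ = 1) (d : Fin n → ℝ) :
    ∃ τ : Equiv.Perm (Fin n), eigval (Q * diagonal d * Qᵀ) = d ∘ τ := by
  refine ⟨Tuple.sort (-d), ?_⟩
  rw [← submatrix_conj_diagonal Q d (Tuple.sort (-d))]
  exact eigval_conj_diagonal (submatrix_mul_transpose_eq_one hQ _)
    fun i j hij => neg_le_neg_iff.mp (Tuple.monotone_sort (-d) hij)

theorem trace_mul_self_eq_eigval_dotProduct (hA : A.IsSymm) :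
    (A * A).trace = eigval A ⬝ᵥ eigval A := by
  obtain ⟨Q, hQ, hspec⟩ := exists_mem_eigOrth hA
  rw [← trace_conj_diagonal_mul_self hQ, ← hspec]

theorem trace_mul_le_eigval_dotProduct (hA : A.IsSymm) (hB : B.IsSymm) :
    (A * B).trace ≤ eigval A ⬝ᵥ eigval B := by
  obtain ⟨Q, hQ, hQspec⟩ := exists_mem_eigOrth hA
  obtain ⟨R, hR, hRspec⟩ := exists_mem_eigOrth hB
  have hfan := trace_conj_diagonal_mul_le hQ hR
    ((eigval_antitone A).monovary (eigval_antitone B))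
  rwa [← hQspec, ← hRspec] at hfan

theorem eigval_add_of_trace_mul_eq (hA : A.IsSymm) (hB : B.IsSymm)
    (hAB : (A * B).trace = eigval A ⬝ᵥ eigval B) :
    eigval (A + B) = eigval A + eigval B := by
  refine (eq_of_dotProduct_self_add_le ?_).symm
  have hleA := trace_mul_le_eigval_dotProduct hA (hA.add hB)
  have hleB := trace_mul_le_eigval_dotProduct hB (hA.add hB)
  rw [Matrix.mul_add, trace_add] at hleA hleB
  rw [← trace_mul_self_eq_eigval_dotProduct (hA.add hB)]
  simp only [add_dotProduct, dotProduct_add, dotProduct_comm (eigval B) (eigval A), ← hAB,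
    ← trace_mul_self_eq_eigval_dotProduct hA, ← trace_mul_self_eq_eigval_dotProduct hB,
    Matrix.add_mul, Matrix.mul_add, trace_add, trace_mul_comm B A] at hleA hleB ⊢
  linarith

-- An orthogonal `P` diagonalizing `A + B` in order already diagonalizes `A` and `B` in order.
theorem simOrdSpec_of_trace_mul_eq (hA : A.IsSymm) (hB : B.IsSymm)
    (hAB : (A * B).trace = eigval A ⬝ᵥ eigval B) : simOrdSpec A B := by
  obtain ⟨P, hP, hspec⟩ := exists_mem_eigOrth (hA.add hB)
  set A' := P * diagonal (eigval A) * Pᵀ with hA'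
  set B' := P * diagonal (eigval B) * Pᵀ with hB'
  have hsum : A + B = A' + B' := by
    rw [hspec, eigval_add_of_trace_mul_eq hA hB hAB, hA', hB', ← Matrix.add_mul, ← Matrix.mul_add,
      diagonal_add]
    rfl
  have hAB' : (A * B').trace ≤ (A * B).trace := by
    rw [hAB]
    exact (trace_mul_le_eigval_dotProduct hA (isSymm_conj_diagonal P _)).trans_eq
      (by rw [eigval_conj_diagonal hP (eigval_antitone B)])
  have hAA' : (A' * A').trace = (A * A).trace := by
    rw [trace_conj_diagonal_mul_self hP, trace_mul_self_eq_eigval_dotProduct hA]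
  have hexpand : (A * A).trace + (A * B).trace = (A * A').trace + (A * B').trace := by
    rw [← trace_add, ← Matrix.mul_add, hsum, Matrix.mul_add, trace_add]
  have hAeq : A = A' := eq_of_trace_mul_self_add_le hA (isSymm_conj_diagonal P _) (by linarith)
  exact ⟨P, hP, hAeq, add_left_cancel (hsum.trans (by rw [← hAeq]))⟩

end Eigval

/-! ### Block structure of a vector with repeated entries -/

section Blocks

variable {ι κ : Type*} {l : ι → ℝ}

/-- The vector `w` is nonincreasing along each block of indices on which `l` is constant. -/
def BlockAntitone [LE ι] (l w : ι → ℝ) : Prop :=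
  ∀ i j, i ≤ j → l i = l j → w j ≤ w i

theorem blockAntitone_of_tendsto [Preorder ι] {β : Type*} {F : Filter β} [F.NeBot] {t : β → ℝ}
    {ws : β → ι → ℝ} {w : ι → ℝ} (ht : ∀ᶠ p in F, 0 < t p) (hw : Tendsto ws F (𝓝 w))
    (hanti : ∀ᶠ p in F, Antitone (l + t p • ws p)) : BlockAntitone l w := by
  intro i j hij hl
  refine le_of_tendsto_of_tendsto (tendsto_pi_nhds.mp hw j) (tendsto_pi_nhds.mp hw i) ?_
  filter_upwards [ht, hanti] with p htp hp
  have hle := hp hij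
  simp only [Pi.add_apply, Pi.smul_apply, smul_eq_mul, hl, add_le_add_iff_left] at hle
  exact le_of_mul_le_mul_left hle htp

open scoped Classical in
/-- The block diagonal part of `G`, the blocks being the sets of indices on which `l` is
constant; all other entries are replaced by zero. -/
def blockDiagPart (l : ι → ℝ) (G : Matrix ι ι ℝ) : Matrix ι ι ℝ :=
  of fun i j => if l i = l j then G i j else 0

theorem blockDiagPart_apply_of_eq {G : Matrix ι ι ℝ} {i j : ι} (hij : l i = l j) :
    blockDiagPart l G i j = G i j :=
  if_pos hij

theorem blockDiagPart_apply_of_ne {G : Matrix ι ι ℝ} {i j : ι} (hij : l i ≠ l j) :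
    blockDiagPart l G i j = 0 :=
  if_neg hij

@[fun_prop]
theorem continuous_blockDiagPart : Continuous (blockDiagPart l) := by
  refine continuous_matrix fun i j => ?_
  by_cases hij : l i = l j
  · simp only [blockDiagPart_apply_of_eq hij]
    fun_prop
  · simp only [blockDiagPart_apply_of_ne hij]
    fun_prop

variable [DecidableEq ι]

theorem diagonal_add_smul (d e : ι → ℝ) (t : ℝ) :
    diagonal (d + t • e) = diagonal d + t • diagonal e := by
  rw [← diagonal_smul, diagonal_add]
  rfl

variable [Fintype ι] {A Q G : Matrix ι ι ℝ} {w : ι → ℝ}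

theorem lie_diagonal_apply (A : Matrix ι ι ℝ) (d : ι → ℝ) (i j : ι) :
    ⁅A, diagonal d⁆ i j = A i j * (d j - d i) := by
  rw [Ring.lie_def, Matrix.sub_apply, mul_diagonal, diagonal_mul]
  ring

theorem commute_diagonal_iff : Commute A (diagonal l) ↔ ∀ i j, l i ≠ l j → A i j = 0 := by
  rw [commute_iff_lie_eq, ← ext_iff]
  refine forall₂_congr fun i j => ?_
  rw [lie_diagonal_apply, Matrix.zero_apply, mul_eq_zero, sub_eq_zero, eq_comm (a := l j)]
  tauto

theorem commute_blockDiagPart : Commute (blockDiagPart l G) (diagonal l) :=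
  commute_diagonal_iff.mpr fun _ _ hij => blockDiagPart_apply_of_ne hij

theorem blockDiagPart_mul (hQ : Commute Q (diagonal l)) :
    blockDiagPart l (G * Q) = blockDiagPart l G * Q := by
  have hQ' := commute_diagonal_iff.mp hQ
  ext i j
  by_cases hij : l i = l j
  · rw [blockDiagPart_apply_of_eq hij, mul_apply, mul_apply]
    refine Finset.sum_congr rfl fun k _ => ?_
    by_cases hik : l i = l k
    · rw [blockDiagPart_apply_of_eq hik]
    · rw [hQ' k j fun hkj => hik (hij.trans hkj.symm), mul_zero, mul_zero]
  · rw [blockDiagPart_apply_of_ne hij,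
      commute_diagonal_iff.mp (commute_blockDiagPart.mul_left hQ) i j hij]

theorem blockDiagPart_of_commute (hA : Commute A (diagonal l)) : blockDiagPart l A = A := by
  ext i j
  by_cases hij : l i = l j
  · exact blockDiagPart_apply_of_eq hij
  · rw [blockDiagPart_apply_of_ne hij, commute_diagonal_iff.mp hA i j hij]

theorem submatrix_mul_of_commute_diagonal [Fintype κ] (hA : Commute A (diagonal l)) {e : κ → ι}
    (he : Function.Injective e) {m : ℝ} (hrange : ∀ k, k ∈ Set.range e ↔ l k = m)
    (B : Matrix ι ι ℝ) : (A * B).submatrix e e = A.submatrix e e * B.submatrix e e := by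
  ext a b
  refine (Fintype.sum_of_injective e he _ _ (fun k hk => ?_) fun c => rfl).symm
  rw [hrange] at hk
  have hea : l (e a) = m := (hrange _).mp ⟨a, rfl⟩
  exact mul_eq_zero_of_left (commute_diagonal_iff.mp hA (e a) k (hea.trans_ne (Ne.symm hk))) _

/-- `Q` is an orthogonal matrix, block diagonal with respect to `l`, which diagonalizes the
diagonal blocks of `G`; the eigenvalues `w` are nonincreasing inside each block. -/
structure IsBlockDiagonalization [LE ι] (l : ι → ℝ) (G Q : Matrix ι ι ℝ) (w : ι → ℝ) :
    Prop where
  mul_transpose : Q * Qᵀ = 1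
  commute : Commute Q (diagonal l)
  blockDiagPart_eq : blockDiagPart l G = Q * diagonal w * Qᵀ
  blockAntitone : BlockAntitone l w

theorem lie_diagonal_of_diagonal_add_smul_eq {t : ℝ} (hQ : Q * Qᵀ = 1)
    (hspec : diagonal l + t • G = Q * diagonal (l + t • w) * Qᵀ) :
    ⁅Q, diagonal l⁆ = t • (G * Q - Q * diagonal w) := by
  have heig : (diagonal l + t • G) * Q = Q * (diagonal l + t • diagonal w) := by
    rw [hspec, Matrix.mul_assoc, mul_eq_one_comm.mp hQ, Matrix.mul_one, diagonal_add_smul]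
  rw [Matrix.add_mul, Matrix.mul_add, Matrix.smul_mul, Matrix.mul_smul] at heig
  rw [Ring.lie_def, smul_sub, sub_eq_sub_iff_add_eq_add, ← heig, add_comm]

theorem blockDiagPart_eq_of_lie_diagonal_eq_smul {t : ℝ} {B : Matrix ι ι ℝ} (ht : t ≠ 0)
    (h : ⁅Q, diagonal l⁆ = t • (A - B)) : blockDiagPart l A = blockDiagPart l B := by
  ext i j
  by_cases hij : l i = l j
  · have hentry : 0 = t * (A i j - B i j) := by
      simpa [lie_diagonal_apply, hij] using congrFun₂ h i j
    rw [blockDiagPart_apply_of_eq hij, blockDiagPart_apply_of_eq hij]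
    exact sub_eq_zero.mp ((zero_eq_mul.mp hentry).resolve_left ht)
  · rw [blockDiagPart_apply_of_ne hij, blockDiagPart_apply_of_ne hij]

-- The commutator of `diagonal l` and `Qs p` is of order `t p`, and its diagonal blocks vanish.
theorem isBlockDiagonalization_of_tendsto [Preorder ι] {β : Type*} {F : Filter β} [F.NeBot]
    {t : β → ℝ} {Gs Qs : β → Matrix ι ι ℝ} {ws : β → ι → ℝ} (ht : Tendsto t F (𝓝[>] 0))
    (hG : Tendsto Gs F (𝓝 G)) (hQ : Tendsto Qs F (𝓝 Q)) (hw : Tendsto ws F (𝓝 w))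
    (horth : ∀ p, Qs p * (Qs p)ᵀ = 1)
    (hspec : ∀ᶠ p in F, diagonal l + t p • Gs p = Qs p * diagonal (l + t p • ws p) * (Qs p)ᵀ)
    (hanti : ∀ᶠ p in F, Antitone (l + t p • ws p)) : IsBlockDiagonalization l G Q w := by
  have hpos : ∀ᶠ p in F, 0 < t p := ht.eventually self_mem_nhdsWithin
  have hlie : ∀ᶠ p in F, ⁅Qs p, diagonal l⁆ = t p • (Gs p * Qs p - Qs p * diagonal (ws p)) :=
    hspec.mono fun p hp => lie_diagonal_of_diagonal_add_smul_eq (horth p) hp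
  have hGQ : Tendsto (fun p => Gs p * Qs p) F (𝓝 (G * Q)) := hG.mul hQ
  have hQw : Tendsto (fun p => Qs p * diagonal (ws p)) F (𝓝 (Q * diagonal w)) :=
    hQ.mul ((Continuous.matrix_diagonal continuous_id).tendsto w |>.comp hw)
  have hQQ : Q * Qᵀ = 1 := tendsto_nhds_unique
    (hQ.mul ((Continuous.matrix_transpose continuous_id).tendsto Q |>.comp hQ))
    (tendsto_const_nhds.congr fun p => (horth p).symm)
  have hcomm : Commute Q (diagonal l) := by
    refine sub_eq_zero.mp (tendsto_nhds_unique
      ((hQ.mul_const (diagonal l)).sub (hQ.const_mul (diagonal l))) ?_)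
    have hrhs := (ht.mono_right nhdsWithin_le_nhds).smul (hGQ.sub hQw)
    rw [zero_smul] at hrhs
    exact hrhs.congr' (hlie.mono fun p hp => hp.symm)
  have hblock : blockDiagPart l (G * Q) = blockDiagPart l (Q * diagonal w) := by
    refine tendsto_nhds_unique ((continuous_blockDiagPart.tendsto _).comp hGQ)
      (((continuous_blockDiagPart.tendsto _).comp hQw).congr' ?_)
    filter_upwards [hpos, hlie] with p hp hp'
    exact (blockDiagPart_eq_of_lie_diagonal_eq_smul hp.ne' hp').symm
  refine ⟨hQQ, hcomm, ?_, blockAntitone_of_tendsto hpos hw hanti⟩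
  rw [← blockDiagPart_of_commute (hcomm.mul_left (commute_diagonal w l)), ← hblock,
    blockDiagPart_mul hcomm, Matrix.mul_assoc, hQQ, Matrix.mul_one]

end Blocks

section BlockEmb

variable {n : ℕ} {X G Q : Matrix (Fin n) (Fin n) ℝ} {w : Fin n → ℝ}

theorem blockEmb_monotone (X : Matrix (Fin n) (Fin n) ℝ) (i : Fin n) :
    Monotone (blockEmb X i) :=
  fun _ _ hab => ((blockSet X i).orderIsoOfFin rfl).monotone hab

theorem blockEmb_injective (X : Matrix (Fin n) (Fin n) ℝ) (i : Fin n) :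
    Function.Injective (blockEmb X i) :=
  Subtype.val_injective.comp ((blockSet X i).orderIsoOfFin rfl).injective

theorem mem_range_blockEmb {i k : Fin n} :
    k ∈ Set.range (blockEmb X i) ↔ eigval X k = eigval X i := by
  have hrange : Set.range (blockEmb X i) = blockSet X i :=
    (blockSet X i).range_orderEmbOfFin rfl
  rw [hrange, Finset.mem_coe, blockSet, Finset.mem_filter_univ]

theorem eigval_blockEmb (i : Fin n) (a : Fin (blockSet X i).card) :
    eigval X (blockEmb X i a) = eigval X i :=
  mem_range_blockEmb.mp ⟨a, rfl⟩

theorem blockEmb_blockIdx (i : Fin n) : blockEmb X i (blockIdx X i) = i := by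
  simp [blockEmb, blockIdx]

theorem blockMat_eq_conj_diagonal (h : IsBlockDiagonalization (eigval X) G Q w) (i : Fin n) :
    blockMat X G i = Q.submatrix (blockEmb X i) (blockEmb X i) * diagonal (w ∘ blockEmb X i)
      * (Q.submatrix (blockEmb X i) (blockEmb X i))ᵀ := by
  have hblock : blockMat X G i
      = (blockDiagPart (eigval X) G).submatrix (blockEmb X i) (blockEmb X i) := by
    ext a b
    exact (blockDiagPart_apply_of_eq (by simp only [eigval_blockEmb])).symm
  have hQw : Commute (Q * diagonal w) (diagonal (eigval X)) :=
    h.commute.mul_left (commute_diagonal _ _)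
  rw [hblock, h.blockDiagPart_eq,
    submatrix_mul_of_commute_diagonal hQw (blockEmb_injective X i) fun _ => mem_range_blockEmb,
    submatrix_mul_of_commute_diagonal h.commute (blockEmb_injective X i)
      fun _ => mem_range_blockEmb, submatrix_diagonal _ _ (blockEmb_injective X i)]
  rfl

theorem eigval_blockMat (h : IsBlockDiagonalization (eigval X) G Q w) (i : Fin n) :
    eigval (blockMat X G i) (blockIdx X i) = w i := by
  have horth : Q.submatrix (blockEmb X i) (blockEmb X i)
      * (Q.submatrix (blockEmb X i) (blockEmb X i))ᵀ = 1 := by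
    rw [transpose_submatrix, ← submatrix_mul_of_commute_diagonal h.commute
      (blockEmb_injective X i) (fun _ => mem_range_blockEmb), h.mul_transpose,
      submatrix_one _ (blockEmb_injective X i)]
  have hanti : Antitone (w ∘ blockEmb X i) := fun a b hab =>
    h.blockAntitone _ _ (blockEmb_monotone X i hab) (by simp only [eigval_blockEmb])
  rw [blockMat_eq_conj_diagonal h, eigval_conj_diagonal horth hanti, Function.comp_apply,
    blockEmb_blockIdx]

theorem lambdaDir_eq {U H : Matrix (Fin n) (Fin n) ℝ}
    (h : IsBlockDiagonalization (eigval X) (Uᵀ * H * U) Q w) : lambdaDir X U H = w :=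
  funext (eigval_blockMat h)

end BlockEmb

/-! ### First-order expansion of the ordered eigenvalues -/

theorem exists_tendsto_of_eventually_mem_isCompact {α β : Type*} [TopologicalSpace β]
    {F : Ultrafilter α} {f : α → β} {S : Set β} (hS : IsCompact S) (hf : ∀ᶠ a in F, f a ∈ S) :
    ∃ b, Tendsto f F (𝓝 b) := by
  obtain ⟨b, -, hb⟩ := hS.ultrafilter_le_nhds (F.map f) (tendsto_principal.mpr hf)
  exact ⟨b, hb⟩

theorem isCompact_setOf_dotProduct_self_le {ι : Type*} [Fintype ι] (r : ℝ) :
    IsCompact {w : ι → ℝ | w ⬝ᵥ w ≤ r} := by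
  refine (isCompact_closedBall (0 : ι → ℝ) √r).of_isClosed_subset
    (isClosed_le (by fun_prop) continuous_const) fun w hw => ?_
  refine mem_closedBall_zero_iff.mpr ((pi_norm_le_iff_of_nonneg (Real.sqrt_nonneg r)).mpr
    fun i => Real.abs_le_sqrt (le_trans ?_ hw))
  rw [sq]
  exact Finset.single_le_sum (f := fun k => w k * w k) (fun k _ => mul_self_nonneg _)
    (Finset.mem_univ i)

section EigvalQuot

variable {n : ℕ} {X H : Sym n} {t : ℝ} {U : Matrix (Fin n) (Fin n) ℝ}

/-- The difference quotient `(λ(X + tH) - λ(X)) / t` of the ordered eigenvalues, with value zero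
at `t = 0`. -/
def eigvalQuot (X : Sym n) (t : ℝ) (H : Sym n) : Fin n → ℝ :=
  t⁻¹ • (eigval (X + t • H).val - eigval X.val)

theorem eigval_add_smul (ht : t ≠ 0) :
    eigval (X + t • H).val = eigval X.val + t • eigvalQuot X t H := by
  rw [eigvalQuot, smul_inv_smul₀ ht, add_sub_cancel]

theorem trace_conj_diagonal_mul_add_smul_le {Q : Matrix (Fin n) (Fin n) ℝ} {d : Fin n → ℝ}
    (ht : t ≠ 0) (hQ : Q * Qᵀ = 1) (hd : Antitone d) :
    (Q * diagonal d * Qᵀ * (X + t • H).val).trace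
      ≤ d ⬝ᵥ eigval X.val + t * (d ⬝ᵥ eigvalQuot X t H) := by
  obtain ⟨R, hR, hspec⟩ := exists_mem_eigOrth (X + t • H).2
  have hfan := trace_conj_diagonal_mul_le hQ hR (hd.monovary (eigval_antitone (X + t • H).val))
  rwa [← hspec, eigval_add_smul ht, dotProduct_add, dotProduct_smul, smul_eq_mul] at hfan

theorem two_mul_eigval_dotProduct_eigvalQuot_add (ht : t ≠ 0) :
    2 * (eigval X.val ⬝ᵥ eigvalQuot X t H) + t * (eigvalQuot X t H ⬝ᵥ eigvalQuot X t H)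
      = 2 * (X.val * H.val).trace + t * (H.val * H.val).trace := by
  have hX := trace_mul_self_eq_eigval_dotProduct X.2
  have hXH := trace_mul_self_eq_eigval_dotProduct (X + t • H).2
  have hval : (X + t • H).val = X.val + t • H.val := rfl
  rw [eigval_add_smul ht, hval] at hXH
  simp only [Matrix.add_mul, Matrix.mul_add, Matrix.smul_mul, Matrix.mul_smul, trace_add,
    trace_smul, smul_eq_mul, dotProduct_add, add_dotProduct, smul_dotProduct, dotProduct_smul,
    trace_mul_comm H.val X.val, dotProduct_comm (eigvalQuot X t H) (eigval X.val)] at hXH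
  refine mul_left_cancel₀ ht ?_
  linarith

theorem eigvalQuot_dotProduct_self_le (ht : 0 < t) :
    eigvalQuot X t H ⬝ᵥ eigvalQuot X t H ≤ (H.val * H.val).trace := by
  obtain ⟨Q, hQ, hspec⟩ := exists_mem_eigOrth X.2
  have hfan := trace_conj_diagonal_mul_add_smul_le (X := X) (H := H) ht.ne' hQ
    (eigval_antitone X.val)
  have hval : (X + t • H).val = X.val + t • H.val := rfl
  rw [← hspec, hval, Matrix.mul_add, Matrix.mul_smul, trace_add, trace_smul, smul_eq_mul,
    trace_mul_self_eq_eigval_dotProduct X.2, add_le_add_iff_left] at hfan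
  have hle : (X.val * H.val).trace ≤ eigval X.val ⬝ᵥ eigvalQuot X t H :=
    le_of_mul_le_mul_left hfan ht
  refine le_of_mul_le_mul_left (a := t) ?_ ht
  linarith [two_mul_eigval_dotProduct_eigvalQuot_add (X := X) (H := H) ht.ne']

theorem exists_tendsto_eigvalQuot (F : Ultrafilter (ℝ × Sym n)) (hF : ↑F ≤ 𝓝[>] (0 : ℝ) ×ˢ 𝓝 H) :
    ∃ w, Tendsto (fun p : ℝ × Sym n => eigvalQuot X p.1 p.2) F (𝓝 w) := by
  have hpos : ∀ᶠ p in (F : Filter (ℝ × Sym n)), 0 < p.1 :=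
    (tendsto_fst.mono_left hF).eventually self_mem_nhdsWithin
  have htrace : Tendsto (fun p : ℝ × Sym n => (p.2.val * p.2.val).trace) F
      (𝓝 (H.val * H.val).trace) :=
    (((by fun_prop : Continuous fun A : Sym n => (A.val * A.val).trace).tendsto H).comp
      tendsto_snd).mono_left hF
  refine exists_tendsto_of_eventually_mem_isCompact
    (isCompact_setOf_dotProduct_self_le ((H.val * H.val).trace + 1)) ?_
  filter_upwards [hpos, htrace.eventually (gt_mem_nhds (lt_add_one _))] with p hp hp'
  exact (eigvalQuot_dotProduct_self_le hp).trans hp'.le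

theorem diagonal_eigval_add_smul_eq (hU : U ∈ eigOrth X.val) {R : Matrix (Fin n) (Fin n) ℝ}
    (hR : R ∈ eigOrth (X + t • H).val) (ht : t ≠ 0) :
    diagonal (eigval X.val) + t • (Uᵀ * H.val * U)
      = Uᵀ * R * diagonal (eigval X.val + t • eigvalQuot X t H) * (Uᵀ * R)ᵀ := by
  have hUU : Uᵀ * U = 1 := mul_eq_one_comm.mp hU.1
  have hX : Uᵀ * X.val * U = diagonal (eigval X.val) := by
    conv_lhs => rw [hU.2]
    simp only [← Matrix.mul_assoc, hUU, Matrix.one_mul]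
    rw [Matrix.mul_assoc, hUU, Matrix.mul_one]
  calc diagonal (eigval X.val) + t • (Uᵀ * H.val * U)
      = Uᵀ * (X + t • H).val * U := by
        rw [← hX, Submodule.coe_add, Submodule.coe_smul, Matrix.mul_add, Matrix.add_mul,
          Matrix.mul_smul, Matrix.smul_mul]
    _ = Uᵀ * (R * diagonal (eigval (X + t • H).val) * Rᵀ) * U := by rw [← hR.2]
    _ = _ := by
        rw [eigval_add_smul ht, transpose_mul, transpose_transpose]
        simp only [Matrix.mul_assoc]

theorem exists_isBlockDiagonalization_of_ultrafilter (hU : U ∈ eigOrth X.val)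
    (F : Ultrafilter (ℝ × Sym n)) (hF : ↑F ≤ 𝓝[>] (0 : ℝ) ×ˢ 𝓝 H) :
    ∃ Q w, IsBlockDiagonalization (eigval X.val) (Uᵀ * H.val * U) Q w ∧
      Tendsto (fun p : ℝ × Sym n => eigvalQuot X p.1 p.2) F (𝓝 w) := by
  have ht : Tendsto Prod.fst (F : Filter (ℝ × Sym n)) (𝓝[>] 0) := tendsto_fst.mono_left hF
  have hne : ∀ᶠ p in (F : Filter (ℝ × Sym n)), p.1 ≠ 0 :=
    (ht.eventually self_mem_nhdsWithin).mono fun p hp => ne_of_gt hp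
  choose R hR using fun p : ℝ × Sym n => exists_mem_eigOrth (X + p.1 • p.2).2
  have hUU : Uᵀ * Uᵀᵀ = 1 := by rw [transpose_transpose, mul_eq_one_comm, hU.1]
  have horth : ∀ p, Uᵀ * R p * (Uᵀ * R p)ᵀ = 1 := fun p =>
    mul_mul_transpose_eq_one hUU (hR p).1
  obtain ⟨w, hw⟩ := exists_tendsto_eigvalQuot (X := X) F hF
  obtain ⟨Q, hQ⟩ := exists_tendsto_of_eventually_mem_isCompact (F := F)
    isCompact_setOf_mul_transpose_eq_one (Eventually.of_forall horth)
  have hG : Tendsto (fun p : ℝ × Sym n => Uᵀ * p.2.val * U) F (𝓝 (Uᵀ * H.val * U)) :=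
    (((by fun_prop : Continuous fun A : Sym n => Uᵀ * A.val * U).tendsto H).comp
      tendsto_snd).mono_left hF
  refine ⟨Q, w, isBlockDiagonalization_of_tendsto ht hG hQ hw horth ?_ ?_, hw⟩
  · exact hne.mono fun p hp => diagonal_eigval_add_smul_eq hU (hR p) hp
  · exact hne.mono fun p hp => eigval_add_smul (X := X) hp ▸ eigval_antitone _

theorem tendsto_eigvalQuot_lambdaDir (hU : U ∈ eigOrth X.val) (H : Sym n) :
    Tendsto (fun p : ℝ × Sym n => eigvalQuot X p.1 p.2) (𝓝[>] 0 ×ˢ 𝓝 H)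
      (𝓝 (lambdaDir X.val U H.val)) := by
  refine tendsto_iff_ultrafilter _ _ _ |>.mpr fun F hF => ?_
  obtain ⟨Q, w, hQ, hw⟩ := exists_isBlockDiagonalization_of_ultrafilter hU F hF
  rwa [lambdaDir_eq hQ]

theorem lambdaDir_eq_of_mem_eigOrth {V : Matrix (Fin n) (Fin n) ℝ} (hU : U ∈ eigOrth X.val)
    (hV : V ∈ eigOrth X.val) (H : Sym n) : lambdaDir X.val U H.val = lambdaDir X.val V H.val :=
  tendsto_nhds_unique (tendsto_eigvalQuot_lambdaDir hU H) (tendsto_eigvalQuot_lambdaDir hV H)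

theorem exists_isBlockDiagonalization_lambdaDir (hU : U ∈ eigOrth X.val) (H : Sym n) :
    ∃ Q, IsBlockDiagonalization (eigval X.val) (Uᵀ * H.val * U) Q (lambdaDir X.val U H.val) := by
  obtain ⟨Q, w, hQ, -⟩ := exists_isBlockDiagonalization_of_ultrafilter hU
    (Ultrafilter.of (𝓝[>] 0 ×ˢ 𝓝 H)) (Ultrafilter.of_le _)
  exact ⟨Q, lambdaDir_eq hQ ▸ hQ⟩

end EigvalQuot

/-! ### The curvature term -/

section Pseudoinverse

variable {n : ℕ} {A B C U X : Matrix (Fin n) (Fin n) ℝ}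

theorem eq_of_penrose (hB : A * B * A = A ∧ B * A * B = B ∧ (A * B)ᵀ = A * B ∧ (B * A)ᵀ = B * A)
    (hC : A * C * A = A ∧ C * A * C = C ∧ (A * C)ᵀ = A * C ∧ (C * A)ᵀ = C * A) : B = C := by
  obtain ⟨hABA, hBAB, hAB, hBA⟩ := hB
  obtain ⟨hACA, hCAC, hAC, hCA⟩ := hC
  have hleft : A * B = A * C := by
    calc A * B = A * C * (A * B) := by rw [← Matrix.mul_assoc, hACA]
      _ = (A * B * (A * C))ᵀ := by rw [transpose_mul, hAB, hAC]
      _ = A * C := by rw [← Matrix.mul_assoc, hABA, hAC]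
  have hright : B * A = C * A := by
    calc B * A = B * A * (C * A) := by rw [Matrix.mul_assoc, ← Matrix.mul_assoc A C A, hACA]
      _ = (C * A * (B * A))ᵀ := by rw [transpose_mul, hBA, hCA]
      _ = C * A := by rw [Matrix.mul_assoc, ← Matrix.mul_assoc A B A, hABA, hCA]
  calc B = B * (A * B) := by rw [← Matrix.mul_assoc, hBAB]
    _ = C * A * C := by rw [hleft, ← Matrix.mul_assoc, hright]
    _ = C := hCAC

theorem pinv_eq (hB : A * B * A = A ∧ B * A * B = B ∧ (A * B)ᵀ = A * B ∧ (B * A)ᵀ = B * A) :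
    pinv A = B := by
  have hex : ∃ B, A * B * A = A ∧ B * A * B = B ∧ (A * B)ᵀ = A * B ∧ (B * A)ᵀ = B * A := ⟨B, hB⟩
  rw [pinv, dif_pos hex]
  exact eq_of_penrose hex.choose_spec hB

theorem pinv_conj_diagonal (hU : U * Uᵀ = 1) (d : Fin n → ℝ) :
    pinv (U * diagonal d * Uᵀ) = U * diagonal d⁻¹ * Uᵀ := by
  have hmul (a b : Fin n → ℝ) :
      U * diagonal a * Uᵀ * (U * diagonal b * Uᵀ) = U * diagonal (a * b) * Uᵀ := by
    rw [conj_mul_conj hU, diagonal_mul_diagonal]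
    rfl
  have hd : d * d⁻¹ * d = d := funext fun i => mul_inv_mul_cancel (d i)
  have hd' : d⁻¹ * d * d⁻¹ = d⁻¹ := funext fun i => by simpa using mul_inv_mul_cancel (d i)⁻¹
  refine pinv_eq ⟨?_, ?_, ?_, ?_⟩
  · rw [hmul, hmul, hd]
  · rw [hmul, hmul, hd']
  · rw [hmul, (isSymm_conj_diagonal U _).eq]
  · rw [hmul, (isSymm_conj_diagonal U _).eq]

theorem smul_one_sub_eq_conj_diagonal (hU : U ∈ eigOrth X) (m : ℝ) :
    m • 1 - X = U * diagonal (fun j => m - eigval X j) * Uᵀ := by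
  have hdiag : diagonal (fun j => m - eigval X j) = m • 1 - diagonal (eigval X) := by
    rw [smul_one_eq_diagonal, diagonal_sub]
  rw [hdiag, Matrix.mul_sub, Matrix.sub_mul, ← hU.2, Matrix.mul_smul, Matrix.mul_one,
    Matrix.smul_mul, hU.1]

end Pseudoinverse

section RotationGenerator

variable {ι : Type*} {l : ι → ℝ} {G K : Matrix ι ι ℝ}

/-- The infinitesimal rotation that removes the entries of `G` outside the blocks on which `l`
is constant from `diagonal l + t • G`, to first order in `t`. Inside a block `l j - l i = 0`,
so the entry is zero. -/
def rotGen (l : ι → ℝ) (G : Matrix ι ι ℝ) : Matrix ι ι ℝ :=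
  of fun i j => G i j * (l j - l i)⁻¹

theorem transpose_rotGen (hG : G.IsSymm) : (rotGen l G)ᵀ = -rotGen l G := by
  ext i j
  rw [transpose_apply, Matrix.neg_apply, rotGen, of_apply, of_apply, hG.apply, ← mul_neg,
    ← inv_neg, neg_sub]

variable [Fintype ι] [DecidableEq ι]

theorem trace_lie_diagonal_mul (K M : Matrix ι ι ℝ) (d : ι → ℝ) :
    (⁅K, diagonal d⁆ * M).trace = ∑ i, ∑ j, K i j * (d j - d i) * M j i := by
  simp only [trace, diag_apply, mul_apply, lie_diagonal_apply]

theorem trace_lie_diagonal_mul_diagonal (K : Matrix ι ι ℝ) (d e : ι → ℝ) :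
    (⁅K, diagonal d⁆ * diagonal e).trace = 0 := by
  rw [trace, Finset.sum_eq_zero]
  intro i _
  rw [diag_apply, mul_diagonal, lie_diagonal_apply, sub_self, mul_zero, zero_mul]

theorem lie_rotGen_add_blockDiagPart (l : ι → ℝ) (G : Matrix ι ι ℝ) :
    ⁅rotGen l G, diagonal l⁆ + blockDiagPart l G = G := by
  ext i j
  rw [Matrix.add_apply, lie_diagonal_apply, rotGen, of_apply]
  by_cases hij : l i = l j
  · rw [blockDiagPart_apply_of_eq hij, hij, sub_self, mul_zero, zero_add]
  · rw [blockDiagPart_apply_of_ne hij, add_zero,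
      inv_mul_cancel_right₀ (sub_ne_zero.mpr (Ne.symm hij))]

theorem trace_lie_rotGen_mul_blockDiagPart (l d : ι → ℝ) (G : Matrix ι ι ℝ) :
    (⁅rotGen l G, diagonal d⁆ * blockDiagPart l G).trace = 0 := by
  rw [trace_lie_diagonal_mul]
  refine Finset.sum_eq_zero fun i _ => Finset.sum_eq_zero fun j _ => ?_
  by_cases hij : l j = l i
  · rw [rotGen, of_apply, hij, sub_self, _root_.inv_zero, mul_zero, zero_mul, zero_mul]
  · rw [blockDiagPart_apply_of_ne hij, mul_zero]

theorem trace_mul_self_eq_trace_lie_rotGen_add [LE ι] {Q : Matrix ι ι ℝ} {w : ι → ℝ}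
    (h : IsBlockDiagonalization l G Q w) :
    (G * G).trace = (⁅rotGen l G, diagonal l⁆ * G).trace + w ⬝ᵥ w := by
  have hdecomp := lie_rotGen_add_blockDiagPart l G
  have hblock : (blockDiagPart l G * G).trace = (blockDiagPart l G * blockDiagPart l G).trace := by
    conv_lhs => rw [← hdecomp, Matrix.mul_add, trace_add]
    rw [hdecomp, trace_mul_comm, trace_lie_rotGen_mul_blockDiagPart, zero_add]
  calc (G * G).trace
      = (⁅rotGen l G, diagonal l⁆ * G).trace + (blockDiagPart l G * G).trace := by
        rw [← trace_add, ← Matrix.add_mul, hdecomp]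
    _ = _ := by
        rw [hblock, h.blockDiagPart_eq, trace_conj_diagonal_mul_self h.mul_transpose]

theorem transpose_lie_diagonal_of_skew (hK : Kᵀ = -K) (d : ι → ℝ) :
    ⁅K, diagonal d⁆ᵀ = ⁅K, diagonal d⁆ := by
  rw [Ring.lie_def, transpose_sub, transpose_mul, transpose_mul, hK, diagonal_transpose,
    Matrix.mul_neg, Matrix.neg_mul, sub_neg_eq_add, neg_add_eq_sub]

theorem trace_lie_mul_lie_of_skew (hK : Kᵀ = -K) (d l : ι → ℝ) :
    (⁅K, diagonal d⁆ * ⁅K, diagonal l⁆).trace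
      = 2 * (⁅K, diagonal d⁆ * (K * diagonal l)).trace := by
  have hflip : (⁅K, diagonal d⁆ * (diagonal l * K)).trace
      = -(⁅K, diagonal d⁆ * (K * diagonal l)).trace := by
    rw [← trace_transpose, transpose_mul, transpose_mul, hK, diagonal_transpose,
      transpose_lie_diagonal_of_skew hK, Matrix.neg_mul, Matrix.neg_mul, trace_neg,
      trace_mul_comm]
  rw [Ring.lie_def K (diagonal l), Matrix.mul_sub, trace_sub, hflip]
  ring

theorem two_mul_trace_lie_rotGen_mul (hG : G.IsSymm) (l d : ι → ℝ) :
    2 * (⁅rotGen l G, diagonal d⁆ * (rotGen l G * diagonal l)).trace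
      = (⁅rotGen l G, diagonal d⁆ * G).trace := by
  calc 2 * (⁅rotGen l G, diagonal d⁆ * (rotGen l G * diagonal l)).trace
      = (⁅rotGen l G, diagonal d⁆ * (⁅rotGen l G, diagonal l⁆ + blockDiagPart l G)).trace := by
        rw [Matrix.mul_add, trace_add, trace_lie_rotGen_mul_blockDiagPart, add_zero,
          trace_lie_mul_lie_of_skew (transpose_rotGen hG)]
    _ = _ := by rw [lie_rotGen_add_blockDiagPart]

end RotationGenerator

theorem isSymm_transpose_mul_mul {ι : Type*} [Fintype ι] {H : Matrix ι ι ℝ} (hH : H.IsSymm)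
    (U : Matrix ι ι ℝ) : (Uᵀ * H * U).IsSymm := by
  rw [IsSymm, transpose_mul, transpose_mul, transpose_transpose, hH.eq, Matrix.mul_assoc]

theorem curvTerm_eq_trace_lie_rotGen {n : ℕ} {X U H : Matrix (Fin n) (Fin n) ℝ}
    (hU : U ∈ eigOrth X) (hH : H.IsSymm) (v : Fin n → ℝ) :
    curvTerm X U H v
      = (⁅rotGen (eigval X) (Uᵀ * H * U), diagonal v⁆ * (Uᵀ * H * U)).trace := by
  rw [trace_lie_diagonal_mul, curvTerm, two_mul]
  set l := eigval X
  set G := Uᵀ * H * U with hG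
  have hGsymm : G.IsSymm := isSymm_transpose_mul_mul hH U
  have hdiag (i : Fin n) :
      (Uᵀ * (H * pinv (l i • (1 : Matrix (Fin n) (Fin n) ℝ) - X) * H) * U) i i
        = ∑ j, G i j * (l i - l j)⁻¹ * G i j := by
    have hconj : Uᵀ * (H * (U * diagonal (fun j => l i - l j)⁻¹ * Uᵀ) * H) * U
        = G * diagonal (fun j => l i - l j)⁻¹ * Gᵀ := by
      rw [hGsymm.eq, hG]
      simp only [Matrix.mul_assoc]
    rw [smul_one_sub_eq_conj_diagonal hU, pinv_conj_diagonal hU.1, hconj, conj_diagonal_apply]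
    rfl
  have hentry (i j : Fin n) : rotGen l G i j * (v j - v i) * G j i
      = v j * (G j i * (l j - l i)⁻¹ * G j i) + v i * (G i j * (l i - l j)⁻¹ * G i j) := by
    rw [rotGen, of_apply, hGsymm.apply i j, ← neg_sub (l j) (l i), inv_neg]
    ring
  simp only [hdiag, hentry, Finset.sum_add_distrib, Finset.mul_sum]
  rw [Finset.sum_comm]

/-! ### Second-order expansion along orthogonal paths -/

section ConstantShift

variable {ι : Type*} [Finite ι] {l v : ι → ℝ}

theorem eventually_antitone_add_smul [Preorder ι] (hl : Antitone l) (hv : BlockAntitone l v) :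
    ∀ᶠ c : ℝ in atTop, Antitone (v + c • l) := by
  suffices ∀ i j, ∀ᶠ c : ℝ in atTop, i ≤ j → v j + c * l j ≤ v i + c * l i from
    (eventually_all.mpr fun i => eventually_all.mpr (this i)).mono fun c hc i j hij => hc i j hij
  intro i j
  by_cases hlij : l i = l j
  · refine Eventually.of_forall fun c hij => ?_
    rw [hlij]
    gcongr
    exact hv i j hij hlij
  · filter_upwards [eventually_ge_atTop ((v j - v i) / (l i - l j))] with c hc hij
    have hpos : 0 < l i - l j := sub_pos.mpr ((hl hij).lt_of_ne' hlij)
    rw [div_le_iff₀ hpos] at hc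
    linarith

theorem eventually_add_smul_apply_ne (l v : ι → ℝ) :
    ∀ᶠ c : ℝ in atTop, ∀ i j, l i ≠ l j → (v + c • l) i ≠ (v + c • l) j := by
  refine eventually_all.mpr fun i => eventually_all.mpr fun j => ?_
  filter_upwards [eventually_gt_atTop ((v j - v i) / (l i - l j))] with c hc hij heq
  rw [Pi.add_apply, Pi.add_apply, Pi.smul_apply, Pi.smul_apply, smul_eq_mul, smul_eq_mul] at heq
  refine hc.ne ?_
  rw [div_eq_iff (sub_ne_zero.mpr hij)]
  linarith

end ConstantShift

section OrthogonalPath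

variable {ι : Type*} [Fintype ι] [DecidableEq ι] {K M G : Matrix ι ι ℝ} {t : ℝ}

attribute [local instance] Matrix.linftyOpNormedRing Matrix.linftyOpNormedAlgebra in
theorem exists_orthogonal_path (hK : Kᵀ = -K) :
    ∃ M : ℝ → Matrix ι ι ℝ, (∀ t, (1 + t • M t) * (1 + t • M t)ᵀ = 1) ∧
      Tendsto M (𝓝[>] 0) (𝓝 K) := by
  refine ⟨fun t => t⁻¹ • (NormedSpace.exp (t • K) - 1), fun t => ?_, ?_⟩
  · rcases eq_or_ne t 0 with rfl | ht
    · simp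
    have hexp : 1 + t • t⁻¹ • (NormedSpace.exp (t • K) - 1) = NormedSpace.exp (t • K) := by
      rw [smul_inv_smul₀ ht, add_sub_cancel]
    rw [hexp, ← Matrix.exp_transpose, transpose_smul, hK, smul_neg,
      ← Matrix.exp_add_of_commute _ _ (Commute.refl (t • K)).neg_right, add_neg_cancel,
      NormedSpace.exp_zero]
  · have hderiv := hasDerivAt_iff_tendsto_slope_zero.mp (hasDerivAt_exp_smul_const (𝕂 := ℝ) K 0)
    simp only [zero_add, zero_smul, NormedSpace.exp_zero, one_mul] at hderiv
    exact hderiv.mono_left (nhdsWithin_mono _ fun _ ht => ne_of_gt ht)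

theorem conj_diagonal_one_add_smul (hC : (1 + t • M) * (1 + t • M)ᵀ = 1) (d : ι → ℝ) :
    (1 + t • M) * diagonal d * (1 + t • M)ᵀ
      = diagonal d + t • (⁅M, diagonal d⁆ * (1 + t • M)ᵀ) := by
  have hmul : (1 + t • M) * diagonal d = diagonal d * (1 + t • M) + t • ⁅M, diagonal d⁆ := by
    rw [Ring.lie_def, Matrix.add_mul, Matrix.mul_add, smul_sub, Matrix.one_mul, Matrix.mul_one,
      Matrix.smul_mul, Matrix.mul_smul]
    abel
  rw [hmul, Matrix.add_mul, Matrix.mul_assoc, hC, Matrix.mul_one, Matrix.smul_mul]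

theorem neg_lie_diagonal (K : Matrix ι ι ℝ) (d : ι → ℝ) : ⁅-K, diagonal d⁆ = -⁅K, diagonal d⁆ := by
  ext i j
  simp only [lie_diagonal_apply, Matrix.neg_apply, neg_mul]

theorem lie_diagonal_add_smul (K : Matrix ι ι ℝ) (d e : ι → ℝ) (c : ℝ) :
    ⁅K, diagonal (d + c • e)⁆ = ⁅K, diagonal d⁆ + c • ⁅K, diagonal e⁆ := by
  ext i j
  simp only [lie_diagonal_apply, Matrix.add_apply, Matrix.smul_apply, Pi.add_apply, Pi.smul_apply,
    smul_eq_mul]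
  ring

/-- The coefficient of `t ^ 2` in the expansion of
`trace (C * diagonal d * Cᵀ * (diagonal l + t • G))` for an orthogonal `C = 1 + t • M`; it still
depends on `t`. -/
def conjTraceRem (t : ℝ) (M : Matrix ι ι ℝ) (d l : ι → ℝ) (G : Matrix ι ι ℝ) : ℝ :=
  (⁅M, diagonal d⁆ * (Mᵀ * diagonal l)).trace + (⁅M, diagonal d⁆ * ((1 + t • M)ᵀ * G)).trace

theorem trace_conj_diagonal_mul_diagonal_add_smul (hC : (1 + t • M) * (1 + t • M)ᵀ = 1)
    (d l : ι → ℝ) (G : Matrix ι ι ℝ) :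
    ((1 + t • M) * diagonal d * (1 + t • M)ᵀ * (diagonal l + t • G)).trace
      = d ⬝ᵥ l + t * (diagonal d * G).trace + t ^ 2 * conjTraceRem t M d l G := by
  have hdl : (diagonal d * diagonal l).trace = d ⬝ᵥ l := by
    rw [diagonal_mul_diagonal, trace_diagonal, dotProduct]
  have hlie : (⁅M, diagonal d⁆ * (1 + t • M)ᵀ * diagonal l).trace
      = t * (⁅M, diagonal d⁆ * (Mᵀ * diagonal l)).trace := by
    rw [transpose_add, transpose_one, transpose_smul, Matrix.mul_add, Matrix.mul_one,
      Matrix.add_mul, trace_add, trace_lie_diagonal_mul_diagonal, zero_add, Matrix.mul_smul,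
      Matrix.smul_mul, trace_smul, smul_eq_mul, Matrix.mul_assoc]
  rw [conj_diagonal_one_add_smul hC, Matrix.add_mul, Matrix.mul_add, Matrix.mul_add, trace_add,
    trace_add, trace_add, hdl, Matrix.smul_mul, trace_smul, hlie, conjTraceRem]
  simp only [Matrix.smul_mul, Matrix.mul_smul, trace_smul, smul_eq_mul, Matrix.mul_assoc]
  ring

theorem tendsto_conjTraceRem {β : Type*} {F : Filter β} {ts : β → ℝ} {Ms Gs : β → Matrix ι ι ℝ}
    (ht : Tendsto ts F (𝓝 t)) (hM : Tendsto Ms F (𝓝 M)) (hG : Tendsto Gs F (𝓝 G))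
    (d l : ι → ℝ) :
    Tendsto (fun p => conjTraceRem (ts p) (Ms p) d l (Gs p)) F (𝓝 (conjTraceRem t M d l G)) := by
  have htrans {A : Matrix ι ι ℝ} {As : β → Matrix ι ι ℝ} (hA : Tendsto As F (𝓝 A)) :
      Tendsto (fun p => (As p)ᵀ) F (𝓝 Aᵀ) :=
    (continuous_id.matrix_transpose.tendsto A).comp hA
  have htrace {A : Matrix ι ι ℝ} {As : β → Matrix ι ι ℝ} (hA : Tendsto As F (𝓝 A)) :
      Tendsto (fun p => (As p).trace) F (𝓝 A.trace) :=
    (continuous_id.matrix_trace.tendsto A).comp hA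
  have hlie : Tendsto (fun p => ⁅Ms p, diagonal d⁆) F (𝓝 ⁅M, diagonal d⁆) :=
    (hM.mul_const _).sub (hM.const_mul _)
  exact (htrace (hlie.mul ((htrans hM).mul_const _))).add
    (htrace (hlie.mul ((htrans ((ht.smul hM).const_add 1)).mul hG)))

theorem two_mul_conjTraceRem_rotGen (hG : G.IsSymm) (d l : ι → ℝ) :
    2 * conjTraceRem 0 (rotGen l G) d l G = (⁅rotGen l G, diagonal d⁆ * G).trace := by
  rw [conjTraceRem, zero_smul, add_zero, transpose_one, Matrix.one_mul, transpose_rotGen hG,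
    Matrix.neg_mul, Matrix.mul_neg, trace_neg, ← two_mul_trace_lie_rotGen_mul hG]
  ring

theorem two_mul_conjTraceRem_transpose_rotGen (hG : G.IsSymm) (d l : ι → ℝ) :
    2 * conjTraceRem 0 (rotGen l G)ᵀ d l (blockDiagPart l G)
      = -(⁅rotGen l G, diagonal d⁆ * G).trace := by
  rw [conjTraceRem, zero_smul, add_zero, transpose_one, Matrix.one_mul, transpose_transpose,
    transpose_rotGen hG, neg_lie_diagonal, Matrix.neg_mul, trace_neg, Matrix.neg_mul, trace_neg,
    trace_lie_rotGen_mul_blockDiagPart, neg_zero, add_zero, mul_neg,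
    two_mul_trace_lie_rotGen_mul hG]

end OrthogonalPath

section LowerBound

variable {n : ℕ} {X Y H : Sym n} {U M : Matrix (Fin n) (Fin n) ℝ} {v : Fin n → ℝ} {t : ℝ}

theorem transpose_mul_add_smul_mul (hU : U ∈ eigOrth X.val) (t : ℝ) (H : Sym n) :
    Uᵀ * (X + t • H).val * U = diagonal (eigval X.val) + t • (Uᵀ * H.val * U) := by
  have hUU : Uᵀ * U = 1 := mul_eq_one_comm.mp hU.1
  have hX : Uᵀ * X.val * U = diagonal (eigval X.val) := by
    calc Uᵀ * X.val * U = Uᵀ * U * diagonal (eigval X.val) * (Uᵀ * U) := by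
          conv_lhs => rw [hU.2]
          simp only [Matrix.mul_assoc]
      _ = diagonal (eigval X.val) := by rw [hUU, Matrix.one_mul, Matrix.mul_one]
  change Uᵀ * (X.val + t • H.val) * U = _
  rw [Matrix.mul_add, Matrix.add_mul, Matrix.mul_smul, Matrix.smul_mul, hX]

theorem trace_conj_diagonal_mul_add_smul (hU : U ∈ eigOrth X.val)
    (hC : (1 + t • M) * (1 + t • M)ᵀ = 1) (d : Fin n → ℝ) (H : Sym n) :
    (U * (1 + t • M) * diagonal d * (U * (1 + t • M))ᵀ * (X + t • H).val).trace
      = d ⬝ᵥ eigval X.val + t * (U * diagonal d * Uᵀ * H.val).trace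
        + t ^ 2 * conjTraceRem t M d (eigval X.val) (Uᵀ * H.val * U) := by
  have hconj : U * (1 + t • M) * diagonal d * (U * (1 + t • M))ᵀ
      = U * ((1 + t • M) * diagonal d * (1 + t • M)ᵀ) * Uᵀ := by
    rw [transpose_mul]
    simp only [Matrix.mul_assoc]
  rw [hconj, trace_conj_mul, transpose_mul_add_smul_mul hU,
    trace_conj_diagonal_mul_diagonal_add_smul hC, trace_conj_mul]

-- Fan's inequality for `X + t • H` and the rotated matrix with eigenvalues `v + c • λ(X)`: the
-- shift by `c • λ(X)` makes these nonincreasing.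
theorem two_mul_conjTraceRem_sub_le (hU : U ∈ eigOrth X.val)
    (hY : Y.val = U * diagonal v * Uᵀ) {c : ℝ} (hanti : Antitone (v + c • eigval X.val))
    (ht : 0 < t) (hC : (1 + t • M) * (1 + t • M)ᵀ = 1) (H : Sym n) :
    2 * conjTraceRem t M (v + c • eigval X.val) (eigval X.val) (Uᵀ * H.val * U)
        - c * (ipM H H - ipV (eigvalQuot X t H) (eigvalQuot X t H))
      ≤ 2 / t * (ipV v (eigvalQuot X t H) - ipM Y H) := by
  have hfan := trace_conj_diagonal_mul_add_smul_le (X := X) (H := H) ht.ne'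
    (mul_mul_transpose_eq_one hU.1 hC) hanti
  have hconj : U * diagonal (v + c • eigval X.val) * Uᵀ = Y.val + c • X.val := by
    rw [diagonal_add_smul, Matrix.mul_add, Matrix.add_mul, Matrix.mul_smul, Matrix.smul_mul,
      ← hY, ← hU.2]
  rw [trace_conj_diagonal_mul_add_smul hU hC, hconj, Matrix.add_mul, trace_add, Matrix.smul_mul,
    trace_smul, smul_eq_mul, add_dotProduct, add_dotProduct, smul_dotProduct, smul_dotProduct,
    smul_eq_mul, smul_eq_mul] at hfan
  have hsq := two_mul_eigval_dotProduct_eigvalQuot_add (X := X) (H := H) ht.ne'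
  rw [div_mul_eq_mul_div, le_div_iff₀ ht]
  simp only [ipM, ipV, ← dotProduct.eq_1]
  set rem := conjTraceRem t M (v + c • eigval X.val) (eigval X.val) (Uᵀ * H.val * U)
  have hdiv : (Y.val * H.val).trace + c * (X.val * H.val).trace + t * rem
      ≤ v ⬝ᵥ eigvalQuot X t H + c * (eigval X.val ⬝ᵥ eigvalQuot X t H) :=
    le_of_mul_le_mul_left (by linarith) ht
  linear_combination 2 * hdiv + c * hsq

theorem two_mul_conjTraceRem_sub_eq_curvTerm (hU : U ∈ eigOrth X.val) (v : Fin n → ℝ) (c : ℝ)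
    (H : Sym n) :
    2 * conjTraceRem 0 (rotGen (eigval X.val) (Uᵀ * H.val * U)) (v + c • eigval X.val)
        (eigval X.val) (Uᵀ * H.val * U)
        - c * (ipM H H - ipV (lambdaDir X.val U H.val) (lambdaDir X.val U H.val))
      = curvTerm X.val U H.val v := by
  obtain ⟨Q, hQ⟩ := exists_isBlockDiagonalization_lambdaDir hU H
  have hHH : ipM H H = (Uᵀ * H.val * U * (Uᵀ * H.val * U)).trace := by
    have hconj := conj_mul_conj (Q := Uᵀ) (by rw [transpose_transpose, mul_eq_one_comm.mp hU.1])
      H.val H.val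
    rw [transpose_transpose] at hconj
    rw [hconj, trace_mul_comm, ← Matrix.mul_assoc, hU.1, Matrix.one_mul, ipM]
  rw [two_mul_conjTraceRem_rotGen (isSymm_transpose_mul_mul H.2 U), lie_diagonal_add_smul,
    Matrix.add_mul, Matrix.smul_mul, trace_add, trace_smul, smul_eq_mul, hHH,
    trace_mul_self_eq_trace_lie_rotGen_add hQ, curvTerm_eq_trace_lie_rotGen hU H.2]
  simp only [ipV, ← dotProduct.eq_1]
  ring

theorem exists_tendsto_curvTerm_le (hU : U ∈ eigOrth X.val) (hY : Y.val = U * diagonal v * Uᵀ)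
    (hv : BlockAntitone (eigval X.val) v) (H : Sym n) :
    ∃ b : ℝ × Sym n → ℝ,
      Tendsto b (𝓝[>] (0 : ℝ) ×ˢ 𝓝 H) (𝓝 (curvTerm X.val U H.val v)) ∧
      ∀ᶠ p in 𝓝[>] (0 : ℝ) ×ˢ 𝓝 H,
        b p ≤ 2 / p.1 * (ipV v (eigvalQuot X p.1 p.2) - ipM Y p.2) := by
  obtain ⟨c, hc⟩ := (eventually_antitone_add_smul (eigval_antitone X.val) hv).exists
  obtain ⟨M, hM, hMlim⟩ := exists_orthogonal_path
    (transpose_rotGen (l := eigval X.val) (isSymm_transpose_mul_mul H.2 U))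
  have hpos : ∀ᶠ p in 𝓝[>] (0 : ℝ) ×ˢ 𝓝 H, 0 < p.1 := tendsto_fst.eventually self_mem_nhdsWithin
  refine ⟨_, ?_, hpos.mono fun p hp => two_mul_conjTraceRem_sub_le hU hY hc hp (hM p.1) p.2⟩
  rw [← two_mul_conjTraceRem_sub_eq_curvTerm hU v c H]
  have hrem := tendsto_conjTraceRem
    (tendsto_fst.mono_right nhdsWithin_le_nhds : Tendsto Prod.fst (𝓝[>] (0 : ℝ) ×ˢ 𝓝 H) (𝓝 0))
    (hMlim.comp tendsto_fst)
    ((by fun_prop : Continuous fun A : Sym n => Uᵀ * A.val * U).tendsto H |>.comp tendsto_snd)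
    (v + c • eigval X.val) (eigval X.val)
  have hHH : Tendsto (fun p : ℝ × Sym n => ipM p.2 p.2) (𝓝[>] (0 : ℝ) ×ˢ 𝓝 H) (𝓝 (ipM H H)) :=
    (by unfold ipM; fun_prop : Continuous fun A : Sym n => ipM A A).tendsto H |>.comp tendsto_snd
  have hquot : Tendsto (fun p : ℝ × Sym n => ipV (eigvalQuot X p.1 p.2) (eigvalQuot X p.1 p.2))
      (𝓝[>] (0 : ℝ) ×ˢ 𝓝 H) (𝓝 (ipV (lambdaDir X.val U H.val) (lambdaDir X.val U H.val))) :=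
    (by unfold ipV; fun_prop : Continuous fun w : Fin n → ℝ => ipV w w).tendsto _ |>.comp
      (tendsto_eigvalQuot_lambdaDir hU H)
  exact (hrem.const_mul 2).sub ((hHH.sub hquot).const_mul c)

end LowerBound

/-! ### Recovery directions -/

section SimultaneousDiagonalization

variable {n : ℕ} {G Q : Matrix (Fin n) (Fin n) ℝ} {l v w : Fin n → ℝ}

theorem conj_eq_self_of_commute {ι : Type*} [Fintype ι] [DecidableEq ι] {P A : Matrix ι ι ℝ}
    (hP : P * Pᵀ = 1) (hPA : Commute P A) : P * A * Pᵀ = A := by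
  rw [hPA.eq, Matrix.mul_assoc, hP, Matrix.mul_one]

theorem conj_diagonal_add_smul {ι : Type*} [Fintype ι] [DecidableEq ι] {P : Matrix ι ι ℝ}
    {l : ι → ℝ} (hP : P * Pᵀ = 1) (hPl : Commute P (diagonal l)) (w : ι → ℝ) (c : ℝ) :
    P * diagonal (w + c • l) * Pᵀ = P * diagonal w * Pᵀ + c • diagonal l := by
  rw [diagonal_add_smul, Matrix.mul_add, Matrix.add_mul, Matrix.mul_smul, Matrix.smul_mul,
    conj_eq_self_of_commute hP hPl]

theorem trace_diagonal_mul_blockDiagPart {ι : Type*} [Fintype ι] [DecidableEq ι] (l v : ι → ℝ)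
    (G : Matrix ι ι ℝ) : (diagonal v * blockDiagPart l G).trace = (diagonal v * G).trace := by
  simp only [trace, diag_apply, diagonal_mul, blockDiagPart_apply_of_eq]

theorem trace_diagonal_mul_shift {ι : Type*} [Fintype ι] [DecidableEq ι] [LE ι]
    {G Q : Matrix ι ι ℝ} {l w : ι → ℝ} (h : IsBlockDiagonalization l G Q w) (v : ι → ℝ) (c : ℝ) :
    (diagonal (v + c • l) * (blockDiagPart l G + c • diagonal l)).trace
      = (v + c • l) ⬝ᵥ (w + c • l) + ((diagonal v * G).trace - v ⬝ᵥ w) := by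
  have hl : (diagonal l * blockDiagPart l G).trace = l ⬝ᵥ w := by
    rw [h.blockDiagPart_eq, ← conj_eq_self_of_commute h.mul_transpose h.commute,
      trace_conj_diagonal_mul_self h.mul_transpose]
  have hdot (a : ι → ℝ) : (diagonal a * diagonal l).trace = a ⬝ᵥ l := by
    rw [diagonal_mul_diagonal, trace_diagonal, dotProduct]
  rw [diagonal_add_smul, Matrix.add_mul, Matrix.mul_add, Matrix.mul_add, Matrix.smul_mul,
    Matrix.smul_mul, Matrix.mul_smul, Matrix.mul_smul]
  simp only [trace_add, trace_smul, smul_eq_mul, trace_diagonal_mul_blockDiagPart, hl, hdot,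
    add_dotProduct, dotProduct_add, smul_dotProduct, dotProduct_smul]
  ring

-- Equality in Fan's inequality for the shifts of `diagonal v` and `blockDiagPart l G` by
-- `c • diagonal l`, with `c` so large that the shifts are ordered and separate the blocks.
theorem exists_isBlockDiagonalization_commute (hl : Antitone l) (hv : BlockAntitone l v)
    (h : IsBlockDiagonalization l G Q w) (heq : (diagonal v * G).trace = v ⬝ᵥ w) :
    ∃ P, IsBlockDiagonalization l G P w ∧ Commute P (diagonal v) := by
  obtain ⟨c, hvc, hwc, hsep⟩ := ((eventually_antitone_add_smul hl hv).and
    ((eventually_antitone_add_smul hl h.blockAntitone).and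
      (eventually_add_smul_apply_ne l v))).exists
  have hB : blockDiagPart l G + c • diagonal l = Q * diagonal (w + c • l) * Qᵀ := by
    rw [conj_diagonal_add_smul h.mul_transpose h.commute, h.blockDiagPart_eq]
  have hA : diagonal (v + c • l) = 1 * diagonal (v + c • l) * (1 : Matrix (Fin n) (Fin n) ℝ)ᵀ := by
    rw [transpose_one, Matrix.one_mul, Matrix.mul_one]
  have heigA : eigval (diagonal (v + c • l)) = v + c • l := by
    rw [hA, eigval_conj_diagonal (by rw [transpose_one, Matrix.one_mul]) hvc]
  have heigB : eigval (blockDiagPart l G + c • diagonal l) = w + c • l := by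
    rw [hB, eigval_conj_diagonal h.mul_transpose hwc]
  have hAsymm : (diagonal (v + c • l)).IsSymm := isSymm_diagonal _
  have hBsymm : (blockDiagPart l G + c • diagonal l).IsSymm := by
    rw [hB]
    exact isSymm_conj_diagonal Q _
  obtain ⟨P, hP, hPA, hPB⟩ := simOrdSpec_of_trace_mul_eq hAsymm hBsymm (by
    rw [heigA, heigB, trace_diagonal_mul_shift h, heq, sub_self, add_zero])
  rw [heigA] at hPA
  rw [heigB] at hPB
  have hcommA : Commute P (diagonal (v + c • l)) := by
    rw [Commute, SemiconjBy]
    conv_rhs => rw [hPA, Matrix.mul_assoc, mul_eq_one_comm.mp hP, Matrix.mul_one]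
  have hcommL : Commute P (diagonal l) := commute_diagonal_iff.mpr fun i j hij =>
    commute_diagonal_iff.mp hcommA i j (hsep i j hij)
  refine ⟨P, ⟨hP, hcommL, ?_, h.blockAntitone⟩, ?_⟩
  · rw [conj_diagonal_add_smul hP hcommL] at hPB
    exact add_right_cancel hPB
  · rw [diagonal_add_smul] at hcommA
    simpa using hcommA.sub_right (hcommL.smul_right c)

end SimultaneousDiagonalization

section Recovery

variable {n : ℕ} {X Y H : Sym n} {U P M V : Matrix (Fin n) (Fin n) ℝ} {v w : Fin n → ℝ} {t : ℝ}

/-- The direction that leads from `X` in time `t` to the matrix with the orthonormal eigenvectors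
`V` and the eigenvalues `λ(X) + t • w`. -/
def recoveryDir (X : Sym n) (V : Matrix (Fin n) (Fin n) ℝ) (t : ℝ) (w : Fin n → ℝ) : Sym n :=
  t⁻¹ • (⟨V * diagonal (eigval X.val + t • w) * Vᵀ, isSymm_conj_diagonal V _⟩ - X)

theorem add_smul_recoveryDir (ht : t ≠ 0) :
    (X + t • recoveryDir X V t w).val = V * diagonal (eigval X.val + t • w) * Vᵀ := by
  rw [recoveryDir, smul_inv_smul₀ ht, add_sub_cancel]

theorem specFn_add_smul_recoveryDir {θ : (Fin n → ℝ) → EReal} (hθ : SymmetricFn θ) (ht : t ≠ 0)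
    (hV : V * Vᵀ = 1) : specFn θ (X + t • recoveryDir X V t w) = θ (eigval X.val + t • w) := by
  obtain ⟨τ, hτ⟩ := exists_eigval_conj_diagonal_eq_comp hV (eigval X.val + t • w)
  rw [specFn, add_smul_recoveryDir ht, hτ]
  exact hθ _ τ

theorem conj_rotated_diagonal_add_smul (hP : P * Pᵀ = 1)
    (hPl : Commute P (diagonal (eigval X.val))) (t : ℝ) (w : Fin n → ℝ)
    (C : Matrix (Fin n) (Fin n) ℝ) :
    U * C * P * diagonal (eigval X.val + t • w) * (U * C * P)ᵀ
      = U * (C * (diagonal (eigval X.val) + t • (P * diagonal w * Pᵀ)) * Cᵀ) * Uᵀ := by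
  have hconj : P * diagonal (eigval X.val + t • w) * Pᵀ
      = diagonal (eigval X.val) + t • (P * diagonal w * Pᵀ) := by
    rw [diagonal_add_smul, Matrix.mul_add, Matrix.add_mul, Matrix.mul_smul, Matrix.smul_mul,
      conj_eq_self_of_commute hP hPl]
  rw [← hconj, transpose_mul, transpose_mul]
  simp only [Matrix.mul_assoc]

theorem recoveryDir_val (hU : U ∈ eigOrth X.val) (hP : P * Pᵀ = 1)
    (hPl : Commute P (diagonal (eigval X.val))) (ht : t ≠ 0)
    (hC : (1 + t • M) * (1 + t • M)ᵀ = 1) :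
    (recoveryDir X (U * (1 + t • M) * P) t w).val
      = U * (⁅M, diagonal (eigval X.val)⁆ * (1 + t • M)ᵀ
        + (1 + t • M) * (P * diagonal w * Pᵀ) * (1 + t • M)ᵀ) * Uᵀ := by
  set W := P * diagonal w * Pᵀ
  have hexp : (1 + t • M) * (diagonal (eigval X.val) + t • W) * (1 + t • M)ᵀ
      = diagonal (eigval X.val)
        + t • (⁅M, diagonal (eigval X.val)⁆ * (1 + t • M)ᵀ + (1 + t • M) * W * (1 + t • M)ᵀ) := by
    rw [Matrix.mul_add, Matrix.add_mul, conj_diagonal_one_add_smul hC, Matrix.mul_smul,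
      Matrix.smul_mul, add_assoc, ← smul_add]
  have hadd := (add_smul_recoveryDir (w := w) ht).trans
    ((conj_rotated_diagonal_add_smul (U := U) hP hPl t w (1 + t • M)).trans
      (congrArg (U * · * Uᵀ) hexp))
  refine smul_right_injective _ ht (add_left_cancel (hadd.trans ?_))
  rw [Matrix.mul_add U, Matrix.add_mul _ _ Uᵀ, ← hU.2, Matrix.mul_smul U, Matrix.smul_mul]

theorem ipM_recoveryDir (hU : U ∈ eigOrth X.val) (hY : Y.val = U * diagonal v * Uᵀ)
    (hP : P * Pᵀ = 1) (hPl : Commute P (diagonal (eigval X.val))) (hPv : Commute P (diagonal v))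
    (ht : t ≠ 0) (hC : (1 + t • M) * (1 + t • M)ᵀ = 1) :
    ipM Y (recoveryDir X (U * (1 + t • M) * P) t w)
      = v ⬝ᵥ w + t * conjTraceRem t Mᵀ v (eigval X.val) (P * diagonal w * Pᵀ) := by
  have hCt : (1 + t • Mᵀ)ᵀ = 1 + t • M := by simp
  have hC' : (1 + t • Mᵀ) * (1 + t • Mᵀ)ᵀ = 1 := by
    rw [hCt]
    simpa using mul_eq_one_comm.mp hC
  have hYX : (Y.val * X.val).trace = v ⬝ᵥ eigval X.val := by
    rw [hY, hU.2, eigval_conj_diagonal hU.1 (eigval_antitone _), trace_conj_diagonal_mul_self hU.1]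
  have hvW : (diagonal v * (P * diagonal w * Pᵀ)).trace = v ⬝ᵥ w := by
    rw [← conj_eq_self_of_commute hP hPv, trace_conj_diagonal_mul_self hP]
  have hexp : (Y.val * (X + t • recoveryDir X (U * (1 + t • M) * P) t w).val).trace
      = v ⬝ᵥ eigval X.val + t * (v ⬝ᵥ w)
        + t ^ 2 * conjTraceRem t Mᵀ v (eigval X.val) (P * diagonal w * Pᵀ) := by
    rw [← hvW, ← trace_conj_diagonal_mul_diagonal_add_smul hC', trace_conj_mul, hCt,
      add_smul_recoveryDir ht, conj_rotated_diagonal_add_smul hP hPl, hY, conj_mul_conj hU.1,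
      trace_mul_comm _ Uᵀ, ← Matrix.mul_assoc, mul_eq_one_comm.mp hU.1, Matrix.one_mul, ← hCt,
      transpose_transpose]
  have hlin : (Y.val * (X + t • recoveryDir X (U * (1 + t • M) * P) t w).val).trace
      = v ⬝ᵥ eigval X.val + t * ipM Y (recoveryDir X (U * (1 + t • M) * P) t w) := by
    rw [← hYX, ipM, ← smul_eq_mul t, ← trace_smul, ← Matrix.mul_smul, ← trace_add,
      ← Matrix.mul_add]
    rfl
  refine mul_left_cancel₀ ht ?_
  linear_combination hexp - hlin

theorem tendsto_recoveryDir (hU : U ∈ eigOrth X.val) (H : Sym n)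
    (hP : IsBlockDiagonalization (eigval X.val) (Uᵀ * H.val * U) P w)
    {Ms : ℝ → Matrix (Fin n) (Fin n) ℝ} (hC : ∀ t, (1 + t • Ms t) * (1 + t • Ms t)ᵀ = 1)
    (hM : Tendsto Ms (𝓝[>] 0) (𝓝 (rotGen (eigval X.val) (Uᵀ * H.val * U)))) :
    Tendsto (fun p => recoveryDir X (U * (1 + p.1 • Ms p.1) * P) p.1 p.2)
      (𝓝[>] (0 : ℝ) ×ˢ 𝓝 w) (𝓝 H) := by
  rw [tendsto_subtype_rng]
  let dir : ℝ × Matrix (Fin n) (Fin n) ℝ × (Fin n → ℝ) → Matrix (Fin n) (Fin n) ℝ := fun q =>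
    U * (⁅q.2.1, diagonal (eigval X.val)⁆ * (1 + q.1 • q.2.1)ᵀ
      + (1 + q.1 • q.2.1) * (P * diagonal q.2.2 * Pᵀ) * (1 + q.1 • q.2.1)ᵀ) * Uᵀ
  have hcont : Continuous dir := by
    simp only [dir, Ring.lie_def]
    fun_prop
  have hlim : dir (0, rotGen (eigval X.val) (Uᵀ * H.val * U), w) = H.val := by
    have hUU : U * (Uᵀ * H.val * U) * Uᵀ = U * Uᵀ * H.val * (U * Uᵀ) := by
      simp only [Matrix.mul_assoc]
    simp only [dir, zero_smul, add_zero, transpose_one, Matrix.mul_one, Matrix.one_mul]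
    rw [← hP.blockDiagPart_eq, lie_rotGen_add_blockDiagPart, hUU, hU.1, Matrix.one_mul,
      Matrix.mul_one]
  have hargs : Tendsto (fun p : ℝ × (Fin n → ℝ) => (p.1, Ms p.1, p.2)) (𝓝[>] (0 : ℝ) ×ˢ 𝓝 w)
      (𝓝 (0, rotGen (eigval X.val) (Uᵀ * H.val * U), w)) :=
    (tendsto_fst.mono_right nhdsWithin_le_nhds).prodMk_nhds
      ((hM.comp tendsto_fst).prodMk_nhds tendsto_snd)
  have hpos : ∀ᶠ p in 𝓝[>] (0 : ℝ) ×ˢ 𝓝 w, 0 < p.1 := tendsto_fst.eventually self_mem_nhdsWithin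
  rw [← hlim]
  refine ((hcont.tendsto _).comp hargs).congr' (hpos.mono fun p hp => ?_)
  exact (recoveryDir_val hU hP.mul_transpose hP.commute hp.ne' (hC p.1)).symm

theorem exists_recoveryDir (hU : U ∈ eigOrth X.val) (hY : Y.val = U * diagonal v * Uᵀ)
    (hv : BlockAntitone (eigval X.val) v) (H : Sym n)
    (hcrit : ipV v (lambdaDir X.val U H.val) = ipM Y H) :
    ∃ V : ℝ → Matrix (Fin n) (Fin n) ℝ, (∀ t, V t * (V t)ᵀ = 1) ∧
      Tendsto (fun p => recoveryDir X (V p.1) p.1 p.2)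
        (𝓝[>] (0 : ℝ) ×ˢ 𝓝 (lambdaDir X.val U H.val)) (𝓝 H) ∧
      Tendsto (fun p => 2 / p.1 * (ipV v p.2 - ipM Y (recoveryDir X (V p.1) p.1 p.2)))
        (𝓝[>] (0 : ℝ) ×ˢ 𝓝 (lambdaDir X.val U H.val)) (𝓝 (curvTerm X.val U H.val v)) := by
  set w := lambdaDir X.val U H.val
  have hG : (Uᵀ * H.val * U).IsSymm := isSymm_transpose_mul_mul H.2 U
  obtain ⟨Q, hQ⟩ := exists_isBlockDiagonalization_lambdaDir hU H
  obtain ⟨P, hP, hPv⟩ := exists_isBlockDiagonalization_commute (eigval_antitone X.val) hv hQ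
    (by rw [← trace_conj_mul, ← hY]; exact hcrit.symm)
  obtain ⟨M, hM, hMlim⟩ := exists_orthogonal_path (transpose_rotGen (l := eigval X.val) hG)
  refine ⟨fun t => U * (1 + t • M t) * P, fun t => mul_mul_transpose_eq_one
    (mul_mul_transpose_eq_one hU.1 (hM t)) hP.mul_transpose,
    tendsto_recoveryDir hU H hP hM hMlim, ?_⟩
  have hrem : Tendsto (fun p : ℝ × (Fin n → ℝ) =>
      conjTraceRem p.1 (M p.1)ᵀ v (eigval X.val) (P * diagonal p.2 * Pᵀ)) (𝓝[>] (0 : ℝ) ×ˢ 𝓝 w)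
      (𝓝 (conjTraceRem 0 (rotGen (eigval X.val) (Uᵀ * H.val * U))ᵀ v (eigval X.val)
        (P * diagonal w * Pᵀ))) :=
    tendsto_conjTraceRem (tendsto_fst.mono_right nhdsWithin_le_nhds)
      ((continuous_id.matrix_transpose.tendsto _).comp (hMlim.comp tendsto_fst))
      ((by fun_prop : Continuous fun w : Fin n → ℝ => P * diagonal w * Pᵀ).tendsto w |>.comp
        tendsto_snd) v (eigval X.val)
  have hlim : curvTerm X.val U H.val v = -(2 * conjTraceRem 0
      (rotGen (eigval X.val) (Uᵀ * H.val * U))ᵀ v (eigval X.val) (P * diagonal w * Pᵀ)) := by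
    rw [← hP.blockDiagPart_eq, two_mul_conjTraceRem_transpose_rotGen hG, neg_neg,
      curvTerm_eq_trace_lie_rotGen hU H.2]
  have hpos : ∀ᶠ p in 𝓝[>] (0 : ℝ) ×ˢ 𝓝 w, 0 < p.1 := tendsto_fst.eventually self_mem_nhdsWithin
  rw [hlim]
  refine (hrem.const_mul 2).neg.congr' (hpos.mono fun p hp => ?_)
  beta_reduce
  rw [ipM_recoveryDir hU hY hP.mul_transpose hP.commute hPv hp.ne' (hM p.1), ipV, ← dotProduct.eq_1]
  field_simp
  ring

end Recovery

/-! ### Second subderivatives -/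

section SecondOrderQuotient

variable {E F : Type*} [AddCommGroup E] [Module ℝ E] [AddCommGroup F] [Module ℝ F]
  {f : E → EReal} {g : F → EReal} {ip : E → E → ℝ} {ip' : F → F → ℝ}
  {x v w : E} {x' v' w' : F} {t : ℝ}

theorem sdq2_eq_sdq2_add (hx : IsFiniteAt g x') (hfx : f x = g x') (ht : 0 < t)
    (hw : f (x + t • w) = g (x' + t • w')) :
    sdq2 ip f x v t w =
      sdq2 ip' g x' v' t w' + ((2 / t * (ip' v' w' - ip v w) : ℝ) : EReal) := by
  rw [sdq2, sdq2, hfx, hw]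
  lift g x' to ℝ using hx with r
  have hpos : 0 < 2 / t ^ 2 := by positivity
  induction g (x' + t • w') with
  | bot => simp only [EReal.bot_sub, EReal.coe_mul_bot_of_pos hpos, EReal.bot_add]
  | top => simp only [EReal.top_sub_coe, EReal.coe_mul_top_of_pos hpos, EReal.top_add_coe]
  | coe a =>
    norm_cast
    field_simp
    ring

theorem coe_le_sdq2 {r c : ℝ} (hx : f x = r) (ht : 0 < t)
    (h : ((r + t * (ip v w + c) : ℝ) : EReal) ≤ f (x + t • w)) :
    ((2 / t * c : ℝ) : EReal) ≤ sdq2 ip f x v t w := by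
  rw [sdq2, hx]
  have hpos : 0 < 2 / t ^ 2 := by positivity
  generalize f (x + t • w) = a at h ⊢
  induction a with
  | bot => exact absurd (le_bot_iff.mp h) (EReal.coe_ne_bot _)
  | top => simp only [EReal.top_sub_coe, EReal.coe_mul_top_of_pos hpos, le_top]
  | coe a =>
    norm_cast at h ⊢
    calc 2 / t * c = 2 / t ^ 2 * (t * c) := by field_simp
      _ ≤ 2 / t ^ 2 * (a - r - t * ip v w) := by gcongr; linarith

variable [TopologicalSpace E]

theorem subderiv2_eq_top {c : ℝ} (hc : 0 < c)
    (h : ∀ᶠ p in 𝓝[>] (0 : ℝ) ×ˢ 𝓝 w, ((2 / p.1 * c : ℝ) : EReal) ≤ sdq2 ip f x v p.1 p.2) :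
    subderiv2 ip f x v w = ⊤ := by
  have hlim : Tendsto (fun p : ℝ × E => 2 / p.1 * c) (𝓝[>] (0 : ℝ) ×ˢ 𝓝 w) atTop := by
    simp only [div_eq_mul_inv]
    exact ((tendsto_inv_nhdsGT_zero.comp tendsto_fst).const_mul_atTop two_pos).atTop_mul_const hc
  refine EReal.eq_top_iff_forall_lt _ |>.mpr fun b => ?_
  refine (EReal.coe_lt_coe_iff.mpr (lt_add_one b)).trans_le
    (le_liminf_of_le (by isBoundedDefault) ?_)
  filter_upwards [h, hlim.eventually_ge_atTop (b + 1)] with p hp hbp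
  exact (EReal.coe_le_coe_iff.mpr hbp).trans hp

theorem subderiv2_le_of_tendsto {ts : ℕ → ℝ} {ws : ℕ → E} {a : EReal} (hpos : ∀ k, 0 < ts k)
    (hts : Tendsto ts atTop (𝓝 0)) (hws : Tendsto ws atTop (𝓝 w))
    (ha : Tendsto (fun k => sdq2 ip f x v (ts k) (ws k)) atTop (𝓝 a)) :
    subderiv2 ip f x v w ≤ a := by
  rw [← ha.liminf_eq]
  exact liminf_le_liminf_of_le (u := fun p : ℝ × E => sdq2 ip f x v p.1 p.2)
    ((tendsto_nhdsWithin_iff.mpr ⟨hts, .of_forall hpos⟩).prodMk hws)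

end SecondOrderQuotient

theorem tendsto_add_coe {α : Type*} {F : Filter α} {f : α → EReal} {g : α → ℝ} {a : EReal} {b : ℝ}
    (hf : Tendsto f F (𝓝 a)) (hg : Tendsto g F (𝓝 b)) :
    Tendsto (fun p => f p + (g p : EReal)) F (𝓝 (a + (b : EReal))) :=
  (EReal.continuousAt_add (p := (a, (b : EReal))) (.inr (EReal.coe_ne_bot b))
    (.inr (EReal.coe_ne_top b))).tendsto.comp (hf.prodMk_nhds (EReal.tendsto_coe.mpr hg))

section Isometry

variable {E : Type*} [AddCommGroup E] [Module ℝ E] [TopologicalSpace E] {f : E → EReal}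
  {ip : E → E → ℝ} {x v : E} {A : E ≃L[ℝ] E}

theorem sdq2_map (hf : ∀ z, f (A z) = f z) (hip : ∀ z w, ip (A z) (A w) = ip z w) (hx : A x = x)
    (t : ℝ) (w : E) : sdq2 ip f x (A v) t (A w) = sdq2 ip f x v t w := by
  have hxw : x + t • A w = A (x + t • w) := by rw [map_add, map_smul, hx]
  rw [sdq2, sdq2, hxw, hf, hip]

theorem subderiv2_map (hf : ∀ z, f (A z) = f z) (hip : ∀ z w, ip (A z) (A w) = ip z w)
    (hx : A x = x) (w : E) : subderiv2 ip f x (A v) (A w) = subderiv2 ip f x v w := by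
  have hmap : Filter.map (Prod.map id A) (𝓝[>] (0 : ℝ) ×ˢ 𝓝 w) = 𝓝[>] (0 : ℝ) ×ˢ 𝓝 (A w) := by
    rw [← A.map_nhds_eq, ← prod_map_map_eq', Filter.map_id]
  rw [subderiv2, ← hmap, liminf, Filter.map_map]
  exact congrArg (fun q => limsInf (Filter.map q (𝓝[>] (0 : ℝ) ×ˢ 𝓝 w)))
    (funext fun p => sdq2_map hf hip hx p.1 p.2)

theorem twiceEpiDiff_map (hf : ∀ z, f (A z) = f z) (hip : ∀ z w, ip (A z) (A w) = ip z w)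
    (hx : A x = x) (h : TwiceEpiDiff ip f x v) : TwiceEpiDiff ip f x (A v) := by
  refine ⟨h.1, fun t ht ht0 w => ?_⟩
  obtain ⟨ws, hws, hlim⟩ := h.2 t ht ht0 (A.symm w)
  refine ⟨fun k => A (ws k), ?_, ?_⟩
  · simpa only [A.apply_symm_apply, Function.comp_def] using (A.continuous.tendsto _).comp hws
  · rw [← subderiv2_map hf hip hx, A.apply_symm_apply] at hlim
    simpa only [sdq2_map hf hip hx] using hlim

theorem regSubgrad_map (hf : ∀ z, f (A z) = f z) (hip : ∀ z w, ip (A z) (A w) = ip z w)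
    (hx : A x = x) (h : RegSubgrad ip f x v) : RegSubgrad ip f x (A v) := by
  refine ⟨h.1, ?_⟩
  have hmap : Filter.map A (𝓝[≠] x) = 𝓝[≠] x := by
    simpa [hx] using A.toHomeomorph.map_punctured_nhds_eq x
  rw [← hmap, liminf, Filter.map_map]
  refine h.2.trans_eq (congrArg (fun q => limsInf (Filter.map q (𝓝[≠] x))) (funext fun z => ?_))
  have hsub : A z - x = A (z - x) := by rw [map_sub, hx]
  simp only [Function.comp_apply, hsub, nrm, hf, hip]

end Isometry

section RegularSubgradient

variable {n : ℕ} {θ : (Fin n → ℝ) → EReal} {l v : Fin n → ℝ}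

theorem nrm_ipV_pos {x : Fin n → ℝ} (hx : x ≠ 0) : 0 < nrm ipV x := by
  obtain ⟨i, hi⟩ := Function.ne_iff.mp hx
  exact Real.sqrt_pos.mpr (Finset.sum_pos' (fun i _ => mul_self_nonneg _)
    ⟨i, Finset.mem_univ _, mul_self_pos.mpr hi⟩)

theorem ipV_smul_right (t : ℝ) (x z : Fin n → ℝ) : ipV x (t • z) = t * ipV x z :=
  dotProduct_smul t x z

theorem nrm_ipV_smul {t : ℝ} (ht : 0 ≤ t) (x : Fin n → ℝ) : nrm ipV (t • x) = t * nrm ipV x := by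
  have hsq : ipV (t • x) (t • x) = t ^ 2 * ipV x x := by
    rw [ipV_smul_right, sq, mul_assoc]
    exact congrArg (t * ·) (smul_dotProduct t x x)
  rw [nrm, hsq, Real.sqrt_mul (sq_nonneg t), Real.sqrt_sq ht, nrm]

theorem continuous_nrm_ipV : Continuous (nrm (ipV (n := n))) :=
  Real.continuous_sqrt.comp (by unfold ipV; fun_prop)

theorem RegSubgrad.eventually_le (h : RegSubgrad ipV θ l v) {r : ℝ} (hr : θ l = r) {δ : ℝ}
    (hδ : 0 < δ) :
    ∀ᶠ z in 𝓝 l, ((r + ipV v (z - l) - δ * nrm ipV (z - l) : ℝ) : EReal) ≤ θ z := by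
  have hneg : ((-δ : ℝ) : EReal) < 0 := by exact_mod_cast neg_lt_zero.mpr hδ
  filter_upwards [eventually_nhdsWithin_iff.mp
    (eventually_lt_of_lt_liminf (hneg.trans_le h.2))] with z hz
  obtain rfl | hzl := eq_or_ne z l
  · simp [hr, nrm, ipV]
  have hN := nrm_ipV_pos (sub_ne_zero.mpr hzl)
  specialize hz hzl
  rw [hr] at hz
  generalize θ z = a at hz ⊢
  induction a with
  | bot =>
    rw [EReal.bot_sub, EReal.bot_sub, EReal.coe_mul_bot_of_pos (inv_pos.mpr hN)] at hz
    exact absurd hz not_lt_bot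
  | top => exact le_top
  | coe a =>
    norm_cast at hz ⊢
    rw [inv_mul_eq_div, lt_div_iff₀ hN] at hz
    linarith

theorem RegSubgrad.eventually_le_sdq2 (h : RegSubgrad ipV θ l v) {ε : ℝ} (hε : 0 < ε)
    (w : Fin n → ℝ) :
    ∀ᶠ p in 𝓝[>] (0 : ℝ) ×ˢ 𝓝 w, ((2 / p.1 * -ε : ℝ) : EReal) ≤ sdq2 ipV θ l v p.1 p.2 := by
  obtain ⟨r, hr⟩ : ∃ r : ℝ, θ l = r := ⟨_, (EReal.coe_toReal h.1.1 h.1.2).symm⟩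
  have hN : 0 < nrm ipV w + 1 := by have := Real.sqrt_nonneg (ipV w w); rw [nrm]; positivity
  have hpt : Tendsto (fun p : ℝ × (Fin n → ℝ) => l + p.1 • p.2) (𝓝[>] (0 : ℝ) ×ˢ 𝓝 w) (𝓝 l) := by
    have ht : Tendsto (fun p : ℝ × (Fin n → ℝ) => p.1) (𝓝[>] (0 : ℝ) ×ˢ 𝓝 w) (𝓝 0) :=
      tendsto_fst.mono_right nhdsWithin_le_nhds
    simpa using (ht.smul tendsto_snd).const_add l
  have hnrm : ∀ᶠ p : ℝ × (Fin n → ℝ) in 𝓝[>] (0 : ℝ) ×ˢ 𝓝 w, nrm ipV p.2 < nrm ipV w + 1 :=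
    (continuous_nrm_ipV.tendsto w).comp tendsto_snd |>.eventually_lt_const (lt_add_one _)
  filter_upwards [hpt.eventually (h.eventually_le hr (div_pos hε hN)), hnrm,
    tendsto_fst.eventually self_mem_nhdsWithin] with ⟨t, w'⟩ hle hw' ht
  have ht : 0 < t := ht
  refine coe_le_sdq2 hr ht (le_trans (EReal.coe_le_coe_iff.mpr ?_) hle)
  rw [add_sub_cancel_left, ipV_smul_right, nrm_ipV_smul ht.le]
  have hbound : ε / (nrm ipV w + 1) * (t * nrm ipV w') ≤ t * ε := by
    calc ε / (nrm ipV w + 1) * (t * nrm ipV w')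
        ≤ ε / (nrm ipV w + 1) * (t * (nrm ipV w + 1)) := by gcongr
      _ = t * ε := by field_simp
  linarith

end RegularSubgradient

/-! ### Second subderivatives of spectral functions -/

section SpectralFunction

variable {n : ℕ} {θ : (Fin n → ℝ) → EReal} {X Y H : Sym n} {U : Matrix (Fin n) (Fin n) ℝ}
  {v : Fin n → ℝ}

theorem sdq2_specFn (hX : IsFiniteAt θ (eigval X.val)) {t : ℝ} (ht : 0 < t) (Y H : Sym n)
    (v : Fin n → ℝ) :
    sdq2 ipM (specFn θ) X Y t H = sdq2 ipV θ (eigval X.val) v t (eigvalQuot X t H) +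
      ((2 / t * (ipV v (eigvalQuot X t H) - ipM Y H) : ℝ) : EReal) :=
  sdq2_eq_sdq2_add hX rfl ht (congrArg θ (eigval_add_smul ht.ne'))

theorem tendsto_ipV_eigvalQuot_sub_ipM (hU : U ∈ eigOrth X.val) (Y H : Sym n) (v : Fin n → ℝ) :
    Tendsto (fun p => ipV v (eigvalQuot X p.1 p.2) - ipM Y p.2) (𝓝[>] (0 : ℝ) ×ˢ 𝓝 H)
      (𝓝 (ipV v (lambdaDir X.val U H.val) - ipM Y H)) :=
  ((by unfold ipV; fun_prop : Continuous (ipV v)).tendsto _ |>.comp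
    (tendsto_eigvalQuot_lambdaDir hU H)).sub
    ((by unfold ipM; fun_prop : Continuous (ipM Y)).tendsto H |>.comp tendsto_snd)

theorem ipM_le_ipV_lambdaDir (hU : U ∈ eigOrth X.val) (hY : Y.val = U * diagonal v * Uᵀ)
    (hv : BlockAntitone (eigval X.val) v) :
    ipM Y H ≤ ipV v (lambdaDir X.val U H.val) := by
  obtain ⟨b, hb, hble⟩ := exists_tendsto_curvTerm_le hU hY hv H
  have hpos : ∀ᶠ p in 𝓝[>] (0 : ℝ) ×ˢ 𝓝 H, 0 < p.1 := tendsto_fst.eventually self_mem_nhdsWithin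
  have hzero : Tendsto (fun p => p.1 / 2 * b p) (𝓝[>] (0 : ℝ) ×ˢ 𝓝 H) (𝓝 0) := by
    have ht : Tendsto (fun p : ℝ × Sym n => p.1) (𝓝[>] (0 : ℝ) ×ˢ 𝓝 H) (𝓝 0) :=
      tendsto_fst.mono_right nhdsWithin_le_nhds
    simpa using (ht.div_const 2).mul hb
  refine sub_nonneg.mp (le_of_tendsto_of_tendsto hzero
    (tendsto_ipV_eigvalQuot_sub_ipM hU Y H v) ?_)
  filter_upwards [hble, hpos] with p hp ht
  rw [div_mul_eq_mul_div, le_div_iff₀ ht] at hp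
  linarith

-- A strict inequality would make the first-order part of the quotient grow like `1 / t`.
theorem ipV_lambdaDir_eq_ipM (hθ : RegSubgrad ipV θ (eigval X.val) v) (hU : U ∈ eigOrth X.val)
    (hY : Y.val = U * diagonal v * Uᵀ) (hv : BlockAntitone (eigval X.val) v)
    (hH : subderiv2 ipM (specFn θ) X Y H ≠ ⊤) :
    ipV v (lambdaDir X.val U H.val) = ipM Y H := by
  by_contra hne
  set γ := ipV v (lambdaDir X.val U H.val) - ipM Y H
  have hγ0 : 0 < γ := sub_pos.mpr ((ipM_le_ipV_lambdaDir hU hY hv).lt_of_ne' hne)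
  refine hH (subderiv2_eq_top (c := γ / 4) (by positivity) ?_)
  have hpair : Tendsto (fun p : ℝ × Sym n => (p.1, eigvalQuot X p.1 p.2)) (𝓝[>] (0 : ℝ) ×ˢ 𝓝 H)
      (𝓝[>] (0 : ℝ) ×ˢ 𝓝 (lambdaDir X.val U H.val)) :=
    tendsto_fst.prodMk (tendsto_eigvalQuot_lambdaDir hU H)
  filter_upwards [tendsto_fst.eventually self_mem_nhdsWithin,
    hpair.eventually (hθ.eventually_le_sdq2 (ε := γ / 4) (by positivity) _),
    (tendsto_ipV_eigvalQuot_sub_ipM hU Y H v).eventually_const_lt (half_lt_self hγ0)]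
    with p ht hθp hgap
  have ht : 0 < p.1 := ht
  rw [sdq2_specFn hθ.1 ht Y p.2 v]
  refine le_trans ?_ (add_le_add_left hθp _)
  rw [← EReal.coe_add, EReal.coe_le_coe_iff, ← mul_add]
  gcongr
  linarith

theorem le_subderiv2_specFn (hX : IsFiniteAt θ (eigval X.val)) (hU : U ∈ eigOrth X.val)
    (hY : Y.val = U * diagonal v * Uᵀ) (hv : BlockAntitone (eigval X.val) v) :
    subderiv2 ipV θ (eigval X.val) v (lambdaDir X.val U H.val) + (curvTerm X.val U H.val v : EReal)
      ≤ subderiv2 ipM (specFn θ) X Y H := by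
  obtain ⟨b, hb, hble⟩ := exists_tendsto_curvTerm_le hU hY hv H
  have hpos : ∀ᶠ p in 𝓝[>] (0 : ℝ) ×ˢ 𝓝 H, 0 < p.1 := tendsto_fst.eventually self_mem_nhdsWithin
  rw [← (EReal.tendsto_coe.mpr hb).liminf_eq]
  calc
    _ ≤ liminf (fun p : ℝ × Sym n => sdq2 ipV θ (eigval X.val) v p.1 (eigvalQuot X p.1 p.2))
          (𝓝[>] (0 : ℝ) ×ˢ 𝓝 H) + liminf (fun p => (b p : EReal)) (𝓝[>] (0 : ℝ) ×ˢ 𝓝 H) :=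
      add_le_add_left (liminf_le_liminf_of_le
        (u := fun p : ℝ × (Fin n → ℝ) => sdq2 ipV θ (eigval X.val) v p.1 p.2)
        (tendsto_fst.prodMk (tendsto_eigvalQuot_lambdaDir hU H))) _
    _ ≤ liminf (fun p : ℝ × Sym n => sdq2 ipV θ (eigval X.val) v p.1 (eigvalQuot X p.1 p.2) + b p)
          (𝓝[>] (0 : ℝ) ×ˢ 𝓝 H) := EReal.le_liminf_add
    _ ≤ subderiv2 ipM (specFn θ) X Y H := by
      refine liminf_le_liminf ?_
      filter_upwards [hble, hpos] with p hp ht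
      rw [sdq2_specFn hX ht Y p.2 v]
      exact add_le_add_right (EReal.coe_le_coe_iff.mpr hp) _

theorem subderiv2_specFn_le (hθ : SymmetricFn θ) (hted : TwiceEpiDiff ipV θ (eigval X.val) v)
    (hU : U ∈ eigOrth X.val) (hY : Y.val = U * diagonal v * Uᵀ)
    (hv : BlockAntitone (eigval X.val) v)
    (hcrit : ipV v (lambdaDir X.val U H.val) = ipM Y H) :
    subderiv2 ipM (specFn θ) X Y H ≤
      subderiv2 ipV θ (eigval X.val) v (lambdaDir X.val U H.val)
        + (curvTerm X.val U H.val v : EReal) := by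
  have hpos (k : ℕ) : (0 : ℝ) < 1 / (k + 1) := Nat.one_div_pos_of_nat
  have hlim : Tendsto (fun k : ℕ => (1 / (k + 1) : ℝ)) atTop (𝓝 0) :=
    tendsto_one_div_add_atTop_nhds_zero_nat
  obtain ⟨ws, hws, hquot⟩ := hted.2 _ hpos hlim (lambdaDir X.val U H.val)
  obtain ⟨V, hV, hdir, hcurv⟩ := exists_recoveryDir hU hY hv H hcrit
  have hseq : Tendsto (fun k : ℕ => ((1 / (k + 1) : ℝ), ws k)) atTop
      (𝓝[>] (0 : ℝ) ×ˢ 𝓝 (lambdaDir X.val U H.val)) :=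
    (tendsto_nhdsWithin_iff.mpr ⟨hlim, .of_forall hpos⟩).prodMk hws
  refine subderiv2_le_of_tendsto hpos hlim (hdir.comp hseq)
    ((tendsto_add_coe hquot (hcurv.comp hseq)).congr fun k => ?_)
  exact (sdq2_eq_sdq2_add (f := specFn θ) hted.1 rfl (hpos k)
    (specFn_add_smul_recoveryDir hθ (hpos k).ne' (hV _))).symm

theorem subderiv2_specFn_eq (hθ : SymmetricFn θ) (hreg : RegSubgrad ipV θ (eigval X.val) v)
    (hted : TwiceEpiDiff ipV θ (eigval X.val) v) (hU : U ∈ eigOrth X.val)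
    (hY : Y.val = U * diagonal v * Uᵀ) (hv : BlockAntitone (eigval X.val) v)
    (hH : subderiv2 ipM (specFn θ) X Y H ≠ ⊤) :
    subderiv2 ipM (specFn θ) X Y H =
      subderiv2 ipV θ (eigval X.val) v (lambdaDir X.val U H.val)
        + (curvTerm X.val U H.val v : EReal) :=
  le_antisymm (subderiv2_specFn_le hθ hted hU hY hv (ipV_lambdaDir_eq_ipM hreg hU hY hv hH))
    (le_subderiv2_specFn hreg.1 hU hY hv)

end SpectralFunction

section BlockPermutation

variable {n : ℕ} {X U : Matrix (Fin n) (Fin n) ℝ} {σ : Equiv.Perm (Fin n)}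
  {θ : (Fin n → ℝ) → EReal} {l y : Fin n → ℝ}

theorem submatrix_mem_eigOrth (hU : U ∈ eigOrth X) (hσ : eigval X ∘ σ = eigval X) :
    U.submatrix id σ ∈ eigOrth X := by
  refine ⟨submatrix_mul_transpose_eq_one hU.1 σ, hU.2.trans ?_⟩
  rw [← submatrix_conj_diagonal U (eigval X) σ, hσ]

theorem curvTerm_submatrix (hσ : eigval X ∘ σ = eigval X) (H : Matrix (Fin n) (Fin n) ℝ)
    (y : Fin n → ℝ) : curvTerm X (U.submatrix id σ) H (y ∘ σ) = curvTerm X U H y := by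
  have hσi (i : Fin n) : eigval X (σ i) = eigval X i := congrFun hσ i
  rw [curvTerm, curvTerm, ← Equiv.sum_comp σ fun i => y i * _]
  simp only [hσi]
  rfl

theorem exists_continuousLinearEquiv_comp_perm (σ : Equiv.Perm (Fin n)) :
    ∃ A : (Fin n → ℝ) ≃L[ℝ] (Fin n → ℝ), (∀ z, A z = z ∘ σ) ∧
      ∀ z w, ipV (A z) (A w) = ipV z w :=
  ⟨(LinearEquiv.funCongrLeft ℝ ℝ σ).toContinuousLinearEquiv, fun _ => rfl,
    fun z w => Equiv.sum_comp σ fun i => z i * w i⟩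

theorem RegSubgrad.comp_perm (h : RegSubgrad ipV θ l y) (hθ : SymmetricFn θ) (hσ : l ∘ σ = l) :
    RegSubgrad ipV θ l (y ∘ σ) := by
  obtain ⟨A, hA, hip⟩ := exists_continuousLinearEquiv_comp_perm σ
  rw [← hA]
  exact regSubgrad_map (fun z => hA z ▸ hθ z σ) hip ((hA l).trans hσ) h

theorem TwiceEpiDiff.comp_perm (h : TwiceEpiDiff ipV θ l y) (hθ : SymmetricFn θ)
    (hσ : l ∘ σ = l) : TwiceEpiDiff ipV θ l (y ∘ σ) := by
  obtain ⟨A, hA, hip⟩ := exists_continuousLinearEquiv_comp_perm σ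
  rw [← hA]
  exact twiceEpiDiff_map (fun z => hA z ▸ hθ z σ) hip ((hA l).trans hσ) h

end BlockPermutation

theorem second_subderiv_spectral_formula_general {n : ℕ} (θ : (Fin n → ℝ) → EReal)
    (X Y : Sym n) (U : Matrix (Fin n) (Fin n) ℝ) (y v : Fin n → ℝ) (σ : Equiv.Perm (Fin n))
    (hsym : SymmetricFn θ)
    (hy : RegSubgrad ipV θ (eigval X.val) y)
    (hU : U ∈ eigOrth X.val)
    (hYdec : Y.val = U * Matrix.diagonal y * Uᵀ)
    (hted : TwiceEpiDiff ipV θ (eigval X.val) y)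
    (hσblock : ∀ i, eigval X.val (σ i) = eigval X.val i)
    (hv : ∀ i, v i = y (σ i))
    (hvdec : ∀ i j : Fin n, i ≤ j → eigval X.val i = eigval X.val j → v j ≤ v i)
    (H : Sym n) (hH : subderiv2 ipM (specFn θ) X Y H ≠ ⊤) :
    subderiv2 ipM (specFn θ) X Y H =
      subderiv2 ipV θ (eigval X.val) v (lambdaDir X.val U H.val)
        + ((curvTerm X.val U H.val y : ℝ) : EReal) := by
  obtain rfl : v = y ∘ σ := funext hv
  have hσ : eigval X.val ∘ σ = eigval X.val := funext hσblock
  have hUσ := submatrix_mem_eigOrth hU hσ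
  rw [lambdaDir_eq_of_mem_eigOrth hU hUσ, ← curvTerm_submatrix hσ]
  exact subderiv2_specFn_eq hsym (hy.comp_perm hsym hσ) (hted.comp_perm hsym hσ) hUσ
    (hYdec.trans (submatrix_conj_diagonal U y σ).symm) hvdec hH

/-- Theorem 3.5, formula: the second subderivative of the spectral function
`g = θ ∘ λ`, at points where it is finite. -/
theorem second_subderiv_spectral_formula {n : ℕ} (θ : (Fin n → ℝ) → EReal)
    (X Y : Sym n) (U : Matrix (Fin n) (Fin n) ℝ) (y v : Fin n → ℝ) (σ : Equiv.Perm (Fin n))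
    (hsym : SymmetricFn θ) (hLip : LocLipRelDom ipV θ)
    (hlsc : LowerSemicontinuous (specFn θ))
    (hY : RegSubgrad ipM (specFn θ) X Y)
    (hy : RegSubgrad ipV θ (eigval X.val) y)
    (hU : U ∈ eigOrth X.val)
    (hYdec : Y.val = U * Matrix.diagonal y * Uᵀ)
    (hted : TwiceEpiDiff ipV θ (eigval X.val) y)
    (hσblock : ∀ i, eigval X.val (σ i) = eigval X.val i)
    (hv : ∀ i, v i = y (σ i))
    (hvdec : ∀ i j : Fin n, i ≤ j → eigval X.val i = eigval X.val j → v j ≤ v i) :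
    ∀ H : Sym n, subderiv2 ipM (specFn θ) X Y H ≠ ⊤ →
      subderiv2 ipM (specFn θ) X Y H =
        subderiv2 ipV θ (eigval X.val) v (lambdaDir X.val U H.val)
          + ((curvTerm X.val U H.val y : ℝ) : EReal) :=
  second_subderiv_spectral_formula_general θ X Y U y v σ hsym hy hU hYdec hted hσblock hv hvdec

end SpecPaper
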